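/- Let n ≥ 2, 1 ≤ k ≤ n-1 and 0 ≤ σ ≤ σ_n = 2^{n-1}·n!. Then the Landau–Kolmogorov pointwise supremum m_k(x,σ) attains its maximum over x ∈ [-1,1] at the endpoint x = 1; that is, for every x ∈ [-1,1], m_k(x,σ) ≤ m_k(1,σ), and hence sup_{x∈[-1,1]} m_k(x,σ) = m_k(1,σ). -/

import Mathlib

open Polynomial Set

/-- `k`-th derivative of the Chebyshev polynomial `T_m`, evaluated at `x`. -/
noncomputable def chebDeriv (m : ℤ) (k : ℕ) (x : ℝ) : ℝ :=
  (derivative^[k] (Polynomial.Chebyshev.T ℝ m)).eval x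

/-- `σ_n = 2^(n-1) n! = T_n^{(n)}(1)`. -/
noncomputable def sigmaN (n : ℕ) : ℝ := 2 ^ (n - 1) * (n.factorial : ℝ)

/-- `f` is `n` times differentiable on the set `s`. -/
def NTimesDiffOn (n : ℕ) (f : ℝ → ℝ) (s : Set ℝ) : Prop :=
  ∀ i < n, DifferentiableOn ℝ (iteratedDerivWithin i f s) s

/-- The class `W^n_∞(σ)` on `[-1,1]`. -/
def memW (n : ℕ) (σ : ℝ) (f : ℝ → ℝ) : Prop :=
  NTimesDiffOn n f (Icc (-1:ℝ) 1) ∧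
  (∀ x ∈ Icc (-1:ℝ) 1, |f x| ≤ 1) ∧
  (∀ x ∈ Icc (-1:ℝ) 1, |iteratedDerivWithin n f (Icc (-1:ℝ) 1) x| ≤ σ)

/-- `m_k(x,σ) = sup { |f^{(k)}(x)| : f ∈ W^n_∞(σ) }`. -/
noncomputable def mval (n k : ℕ) (x σ : ℝ) : ℝ :=
  sSup {y | ∃ f : ℝ → ℝ, memW n σ f ∧
    y = |iteratedDerivWithin k f (Icc (-1:ℝ) 1) x|}

/-- `m_k^*(x,σ) = sup { |f^{(k)}(x)| : f ∈ W^n_∞(σ), f^{(k+1)}(x) = 0 }`. -/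
noncomputable def mstar (n k : ℕ) (x σ : ℝ) : ℝ :=
  sSup {y | ∃ f : ℝ → ℝ, memW n σ f ∧
    iteratedDerivWithin (k+1) f (Icc (-1:ℝ) 1) x = 0 ∧
    y = |iteratedDerivWithin k f (Icc (-1:ℝ) 1) x|}

/-- `μ_k(x₀)`: best constant in the pointwise Markov inequality. -/
noncomputable def muk (n k : ℕ) (x : ℝ) : ℝ :=
  sSup {y | ∃ p : Polynomial ℝ, p.natDegree ≤ n ∧
    (∀ t ∈ Icc (-1:ℝ) 1, |p.eval t| ≤ 1) ∧
    y = |(derivative^[k] p).eval x|}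

/-- `μ_k^*(x₀)`: best constant in the pointwise Schur-type inequality. -/
noncomputable def mukStar (n k : ℕ) (x : ℝ) : ℝ :=
  sSup {y | ∃ p : Polynomial ℝ, p.natDegree ≤ n ∧
    (∀ t ∈ Icc (-1:ℝ) 1, |p.eval t| ≤ 1) ∧
    (derivative^[k+1] p).eval x = 0 ∧
    y = |(derivative^[k] p).eval x|}

/-! Put `N = n - 1` and `σ = s σ_n` with `0 ≤ s ≤ 1`. After a reflection and a change of sign,
the maximum over `[-1, 1]` of `|f^{(k)}|` is the value of `f^{(k)}` at some `x ∈ [0, 1]`, and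
`f^{(k+1)}(x) = 0` when `x < 1`.

For `k < N` such an `f` is compared with `Q = T_N - s ω + μ ν`. Here `ω = T_{N+1} - T_{N-1}`
vanishes at every extremal node of `T_N`, `ν = (X - 1) T_N'` vanishes at every node except `-1`,
and `μ` is chosen so that `Q^{(k+1)}(x) = 0`. Alternation at the nodes and repeated use of Rolle's
theorem give `|f^{(k)}(x)| ≤ |Q^{(k)}(x)|`. Laguerre's inequality for polynomials with only real
roots and the Chebyshev differential equation bound the right-hand side by the `k`-th derivative
at `1` of `(1 - s) T_N + s T_{N+1}`, which belongs to the class.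

For `k = N ≥ 2` there are two cases. If `x` is not close to `1`, then `f` is compared with a
polynomial interpolating `T_N` at its nodes whose `N`-th derivative is a parabola with vertex at
`x`. If `x` is close to `1`, then `f` is continued past `x` so that `f^{(N)}` keeps growing up to
the endpoint, and the small excess over `1` of the continued function is removed by rescaling.
For `n = 2` the extremal functions are parabolas. -/

/-! ### Sign alternation and Rolle's theorem -/

/-- `g` takes nonzero values of alternating sign at `m` points of `s`, listed from right to left,
the first of these signs being that of `ε`. -/
def Alternates (g : ℝ → ℝ) : Set ℝ → ℕ → ℝ → Prop
  | _, 0, _ => True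
  | s, m + 1, ε => ∃ z ∈ s, 0 < ε * g z ∧ Alternates g (s ∩ Iio z) m (-ε)

/-- `D 0, D 1, …, D n` are successive derivatives on `s`. Carrying the whole sequence avoids
iterated derivatives of sums, reflections and glued functions. -/
def IsDerivTower (s : Set ℝ) (n : ℕ) (D : ℕ → ℝ → ℝ) : Prop :=
  ∀ i < n, ∀ x ∈ s, HasDerivWithinAt (D i) (D (i + 1) x) s x

section Alternates

variable {s t : Set ℝ} {g g' : ℝ → ℝ} {m l : ℕ} {ε : ℝ}

lemma Alternates.mono (hst : s ⊆ t) (h : Alternates g s m ε) : Alternates g t m ε := by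
  induction m generalizing s t ε with
  | zero => trivial
  | succ m ih =>
    obtain ⟨z, hz, hgz, htail⟩ := h
    exact ⟨z, hst hz, hgz, ih (inter_subset_inter_left _ hst) htail⟩

lemma Alternates.of_seq {z : ℕ → ℝ} (hanti : ∀ i, i + 1 < m → z (i + 1) < z i)
    (hmem : ∀ i < m, z i ∈ s) (hsign : ∀ i < m, 0 < ε * (-1) ^ i * g (z i)) :
    Alternates g s m ε := by
  induction m generalizing s z ε with
  | zero => trivial
  | succ m ih =>
    have hlt : ∀ i < m, z (i + 1) < z 0 := by
      intro i hi
      induction i with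
      | zero => exact hanti 0 (by omega)
      | succ i ihi => exact (hanti (i + 1) (by omega)).trans (ihi (by omega))
    refine ⟨z 0, hmem 0 (by omega), by simpa using hsign 0 (by omega),
      ih (z := fun i => z (i + 1)) (fun i hi => hanti (i + 1) (by omega))
        (fun i hi => ⟨hmem (i + 1) (by omega), hlt i hi⟩) fun i hi => ?_⟩
    have := hsign (i + 1) (by omega)
    rw [pow_succ] at this
    linarith

lemma Alternates.exists_pos (h : Alternates g s 1 ε) : ∃ x ∈ s, 0 < ε * g x := by
  obtain ⟨z, hz, hgz, -⟩ := h
  exact ⟨z, hz, hgz⟩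

lemma Alternates.append {x : ℝ} (hright : Alternates g (s ∩ Ioi x) m ε)
    (hleft : Alternates g (s ∩ Iio x) l ((-1) ^ m * ε)) : Alternates g s (m + l) ε := by
  induction m generalizing s ε with
  | zero => simpa using hleft.mono inter_subset_left
  | succ m ih =>
    obtain ⟨z, ⟨hzs, hxz⟩, hgz, htail⟩ := hright
    rw [Nat.add_right_comm]
    refine ⟨z, hzs, hgz, ih (htail.mono ?_) ?_⟩
    · exact fun y hy => ⟨⟨hy.1.1, hy.2⟩, hy.1.2⟩
    · rw [pow_succ, mul_assoc, neg_one_mul] at hleft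
      exact hleft.mono fun y hy => ⟨⟨hy.1, (mem_Iio.1 hy.2).trans hxz⟩, hy.2⟩

lemma Alternates.exists_split {x : ℝ} (hgx : g x = 0) (h : Alternates g s m ε) :
    ∃ j l, j + l = m ∧ Alternates g (s ∩ Ioi x) j ε ∧
      Alternates g (s ∩ Iio x) l ((-1) ^ j * ε) := by
  induction m generalizing s ε with
  | zero => exact ⟨0, 0, rfl, trivial, trivial⟩
  | succ m ih =>
    obtain ⟨z, hzs, hgz, htail⟩ := h
    rcases lt_trichotomy z x with hzx | rfl | hxz
    · refine ⟨0, m + 1, zero_add _, trivial, z, ⟨hzs, hzx⟩, by simpa using hgz, ?_⟩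
      rw [pow_zero, one_mul]
      exact htail.mono fun y hy => ⟨⟨hy.1, (mem_Iio.1 hy.2).trans hzx⟩, hy.2⟩
    · simp [hgx] at hgz
    · obtain ⟨j, l, rfl, hr, hl⟩ := ih htail
      refine ⟨j + 1, l, by omega, ⟨z, ⟨hzs, hxz⟩, hgz, ?_⟩, ?_⟩
      · exact hr.mono fun y hy => ⟨⟨hy.1.1, hy.2⟩, hy.1.2⟩
      · rw [pow_succ, mul_assoc, neg_one_mul]
        exact hl.mono fun y hy => ⟨hy.1.1, hy.2⟩

variable [s.OrdConnected]

lemma exists_deriv_mul_sub_eq (hg : ∀ x ∈ s, HasDerivWithinAt g (g' x) s x) {a b : ℝ}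
    (ha : a ∈ s) (hb : b ∈ s) (hab : a < b) : ∃ c ∈ s ∩ Ioo a b, g' c * (b - a) = g b - g a := by
  have hsub : Icc a b ⊆ s := s.Icc_subset ha hb
  obtain ⟨c, hc, hslope⟩ := exists_hasDerivAt_eq_slope g g' hab
    (fun x hx => ((hg x (hsub hx)).continuousWithinAt).mono hsub)
    (fun x hx => ((hg x (hsub (Ioo_subset_Icc_self hx))).mono hsub).hasDerivAt
      (Icc_mem_nhds hx.1 hx.2))
  exact ⟨c, ⟨hsub (Ioo_subset_Icc_self hc), hc⟩,
    by rw [hslope, div_mul_cancel₀ _ (sub_pos.2 hab).ne']⟩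

lemma exists_deriv_pos_of_sign_change (hg : ∀ x ∈ s, HasDerivWithinAt g (g' x) s x) {a b : ℝ}
    (ha : a ∈ s) (hb : b ∈ s) (hab : a < b) (hlt : ε * g a < ε * g b) :
    ∃ c ∈ s ∩ Ioo a b, 0 < ε * g' c := by
  obtain ⟨c, hc, hslope⟩ := exists_deriv_mul_sub_eq hg ha hb hab
  refine ⟨c, hc, pos_of_mul_pos_left (b := b - a) ?_ (sub_pos.2 hab).le⟩
  rw [mul_assoc, hslope]
  linarith

lemma Alternates.deriv_of_right_nonpos (hg : ∀ x ∈ s, HasDerivWithinAt g (g' x) s x) {b : ℝ}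
    (hb : b ∈ s) (hgb : ε * g b ≤ 0) (h : Alternates g (s ∩ Iio b) m ε) :
    Alternates g' (s ∩ Iio b) m (-ε) := by
  induction m generalizing b ε with
  | zero => trivial
  | succ m ih =>
    obtain ⟨z, ⟨hzs, hzb⟩, hgz, htail⟩ := h
    obtain ⟨c, ⟨hcs, hzc, hcb⟩, hgc⟩ :=
      exists_deriv_pos_of_sign_change (ε := -ε) hg hzs hb hzb (by linarith)
    refine ⟨c, ⟨hcs, hcb⟩, hgc, (ih hzs (by linarith) ?_).mono ?_⟩
    · exact htail.mono fun y hy => ⟨hy.1.1, hy.2⟩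
    · exact fun y hy => ⟨⟨hy.1, (mem_Iio.1 hy.2).trans hzb⟩, (mem_Iio.1 hy.2).trans hzc⟩

lemma Alternates.deriv (hg : ∀ x ∈ s, HasDerivWithinAt g (g' x) s x)
    (h : Alternates g s (m + 1) ε) : Alternates g' s m ε := by
  obtain ⟨z, hzs, hgz, htail⟩ := h
  have := htail.deriv_of_right_nonpos hg hzs (by linarith)
  rw [neg_neg] at this
  exact this.mono inter_subset_left

lemma Alternates.deriv_Ioo_of_left_eq_zero (hg : ∀ x ∈ s, HasDerivWithinAt g (g' x) s x)
    {a b : ℝ} (ha : a ∈ s) (hb : b ∈ s) (hab : a < b) (hga : g a = 0) (hgb : 0 < ε * g b)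
    (h : Alternates g (s ∩ Ioo a b) m (-ε)) : Alternates g' (s ∩ Ioo a b) (m + 1) ε := by
  induction m generalizing b ε with
  | zero =>
    obtain ⟨c, hc, hgc⟩ := exists_deriv_pos_of_sign_change hg ha hb hab (by simpa [hga] using hgb)
    exact ⟨c, hc, hgc, trivial⟩
  | succ m ih =>
    obtain ⟨z, ⟨hzs, haz, hzb⟩, hgz, htail⟩ := h
    obtain ⟨c, ⟨hcs, hzc, hcb⟩, hgc⟩ := exists_deriv_pos_of_sign_change (ε := ε) hg hzs hb hzb
      (by linarith)
    refine ⟨c, ⟨hcs, haz.trans hzc, hcb⟩, hgc, (ih hzs haz hgz (htail.mono ?_)).mono ?_⟩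
    · exact fun y hy => ⟨hy.1.1, hy.1.2.1, hy.2⟩
    · exact fun y hy => ⟨⟨hy.1, hy.2.1, hy.2.2.trans hzb⟩, hy.2.2.trans hzc⟩

lemma Alternates.deriv_of_left_eq_zero (hg : ∀ x ∈ s, HasDerivWithinAt g (g' x) s x) {a : ℝ}
    (ha : a ∈ s) (hga : g a = 0) (h : Alternates g (s ∩ Ioi a) m ε) :
    Alternates g' (s ∩ Ioi a) m ε := by
  cases m with
  | zero => trivial
  | succ m =>
    obtain ⟨z, ⟨hzs, haz⟩, hgz, htail⟩ := h
    refine (Alternates.deriv_Ioo_of_left_eq_zero hg ha hzs haz hga hgz (htail.mono ?_)).mono ?_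
    · exact fun y hy => ⟨hy.1.1, hy.1.2, hy.2⟩
    · exact fun y hy => ⟨hy.1, hy.2.1⟩

/-- Rolle's theorem loses one sign per differentiation on each side of `x`; the zero of `g`, and
then that of `g'`, at `x` make up for both losses. -/
lemma Alternates.deriv_deriv_of_double_zero {g'' : ℝ → ℝ}
    (hg : ∀ x ∈ s, HasDerivWithinAt g (g' x) s x) (hg' : ∀ x ∈ s, HasDerivWithinAt g' (g'' x) s x)
    {x : ℝ} (hx : x ∈ s) (hgx : g x = 0) (hgx' : g' x = 0) (h : Alternates g s m ε) :
    Alternates g'' s m ε := by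
  obtain ⟨j, l, rfl, hr, hl⟩ := h.exists_split hgx
  have hr'' := (hr.deriv_of_left_eq_zero hg hx hgx).deriv_of_left_eq_zero hg' hx hgx'
  have hl'' := (hl.deriv_of_right_nonpos hg hx (by simp [hgx])).deriv_of_right_nonpos hg' hx
    (by simp [hgx'])
  rw [neg_neg] at hl''
  exact hr''.append hl''

end Alternates

namespace IsDerivTower

variable {s : Set ℝ} {n m : ℕ} {D E : ℕ → ℝ → ℝ}

lemma add (hD : IsDerivTower s n D) (hE : IsDerivTower s n E) :
    IsDerivTower s n fun i x => D i x + E i x :=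
  fun i hi x hx => (hD i hi x hx).add (hE i hi x hx)

lemma const_mul (hD : IsDerivTower s n D) (a : ℝ) : IsDerivTower s n fun i x => a * D i x :=
  fun i hi x hx => (hD i hi x hx).const_mul a

lemma sub (hD : IsDerivTower s n D) (hE : IsDerivTower s n E) :
    IsDerivTower s n fun i x => D i x - E i x :=
  fun i hi x hx => (hD i hi x hx).sub (hE i hi x hx)

lemma shift (hD : IsDerivTower s (n + m) D) : IsDerivTower s n fun i => D (i + m) :=
  fun i hi x hx => by simpa only [Nat.add_right_comm] using hD (i + m) (by omega) x hx

lemma of_le (hD : IsDerivTower s n D) (h : m ≤ n) : IsDerivTower s m D :=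
  fun i hi => hD i (hi.trans_le h)

variable [s.OrdConnected] {ε : ℝ}

lemma alternates (hD : IsDerivTower s n D) (h : Alternates (D 0) s (m + n) ε) :
    Alternates (D n) s m ε := by
  induction n generalizing m with
  | zero => exact h
  | succ n ih =>
    exact (ih (m := m + 1) (hD.of_le n.le_succ) (by convert h using 1; omega)).deriv
      (hD n n.lt_succ_self)

lemma exists_pos_of_double_zero (hD : IsDerivTower s (m + 2) D) {x : ℝ} (hx : x ∈ s)
    (h0 : D 0 x = 0) (h1 : D 1 x = 0) (h : Alternates (D 0) s (m + 1) ε) :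
    ∃ ξ ∈ s, 0 < ε * D (m + 2) ξ := by
  have h2 : Alternates (D 2) s (m + 1) ε :=
    h.deriv_deriv_of_double_zero (hD 0 (by omega)) (hD 1 (by omega)) hx h0 h1
  exact (hD.shift.alternates (by rwa [add_comm 1, Nat.zero_add])).exists_pos

lemma exists_neg_of_right_nonpos (hD : IsDerivTower s (m + 1) D) {b : ℝ} (hb : IsGreatest s b)
    (hDb : ε * D 0 b ≤ 0) (h : Alternates (D 0) s (m + 1) ε) :
    ∃ ξ ∈ s, ε * D (m + 1) ξ < 0 := by
  obtain ⟨z, hzs, hDz, htail⟩ := h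
  have hzb : z < b := (hb.2 hzs).lt_of_ne (by rintro rfl; linarith)
  have hlt : Alternates (D 0) (s ∩ Iio b) (m + 1) ε :=
    ⟨z, ⟨hzs, hzb⟩, hDz, htail.mono fun y hy => ⟨⟨hy.1, (mem_Iio.1 hy.2).trans hzb⟩, hy.2⟩⟩
  have h1 := (hlt.deriv_of_right_nonpos (hD 0 (by omega)) hb.1 hDb).mono inter_subset_left
  obtain ⟨ξ, hξ, hpos⟩ := (hD.shift.alternates (by rwa [add_comm 1, Nat.zero_add])).exists_pos
  exact ⟨ξ, hξ, by linarith⟩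

end IsDerivTower

lemma le_of_hasDerivWithinAt_nonneg {g g' : ℝ → ℝ} {a b : ℝ} (hab : a ≤ b)
    (hg : ∀ x ∈ Icc a b, HasDerivWithinAt g (g' x) (Icc a b) x)
    (hg' : ∀ x ∈ Icc a b, 0 ≤ g' x) : g a ≤ g b :=
  monotoneOn_of_hasDerivWithinAt_nonneg (convex_Icc a b) (fun x hx => (hg x hx).continuousWithinAt)
    (fun x hx => (hg x (interior_subset hx)).mono interior_subset)
    (fun x hx => hg' x (interior_subset hx)) (left_mem_Icc.2 hab) (right_mem_Icc.2 hab) hab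

lemma IsDerivTower.taylor_two_le {D : ℕ → ℝ → ℝ} {a b c : ℝ} (hab : a ≤ b)
    (hD : IsDerivTower (Icc a b) 2 D) (hc : ∀ x ∈ Icc a b, c ≤ D 2 x) :
    D 0 a + D 1 a * (b - a) + c / 2 * (b - a) ^ 2 ≤ D 0 b := by
  have hlin (x : ℝ) : HasDerivWithinAt (fun t => t - a) 1 (Icc a b) x :=
    (hasDerivWithinAt_id x _).sub_const a
  have slope {x : ℝ} (hx : x ∈ Icc a b) : D 1 a + c * (x - a) ≤ D 1 x := by
    have hsub : Icc a x ⊆ Icc a b := Icc_subset_Icc_right hx.2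
    have := le_of_hasDerivWithinAt_nonneg (g := fun t => D 1 t - c * (t - a)) hx.1
      (fun t ht => ((hD 1 (by norm_num) t (hsub ht)).sub ((hlin t).const_mul c)).mono hsub)
      (fun t ht => by linarith [hc t (hsub ht)])
    linarith
  have := le_of_hasDerivWithinAt_nonneg hab
    (g := fun t => D 0 t - D 1 a * (t - a) - c / 2 * (t - a) ^ 2)
    (fun t ht => ((hD 0 (by norm_num) t ht).sub ((hlin t).const_mul (D 1 a))).sub
      (((hlin t).pow 2).const_mul (c / 2)))
    (fun t ht => by norm_num; linarith [slope ht])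
  simp only [sub_self] at this
  linarith

/-! ### Polynomials with only real roots -/

section RealRooted

variable {R : Type*} [CommRing R]

lemma iterate_derivative_mul_X_sub_C (p : R[X]) (a : R) (i : ℕ) :
    derivative^[i] (p * (X - C a)) =
      derivative^[i] p * (X - C a) + i • derivative^[i - 1] p := by
  rw [mul_sub, iterate_derivative_sub, iterate_derivative_mul_X, mul_comm p (C a),
    iterate_derivative_C_mul]
  ring

variable [LinearOrder R] [IsStrictOrderedRing R]

/-- Laguerre's inequality; `p'² - p p''` is additive over products up to square factors. -/
lemma eval_mul_eval_derivative_derivative_le_sq {p : R[X]} (hp : p.Splits) (x : R) :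
    p.eval x * (derivative (derivative p)).eval x ≤ (derivative p).eval x ^ 2 := by
  induction hp using Submonoid.closure_induction with
  | mem q hq => rcases hq with ⟨a, rfl⟩ | ⟨a, rfl⟩ <;> simp
  | one => simp
  | mul p q _ _ ihp ihq =>
    simp only [derivative_mul, derivative_add, eval_add, eval_mul]
    nlinarith [mul_le_mul_of_nonneg_left ihp (sq_nonneg (q.eval x)),
      mul_le_mul_of_nonneg_left ihq (sq_nonneg (p.eval x))]

lemma eval_iterate_derivative_prod_X_sub_C_nonneg {s : Multiset R} {x : R} (hs : ∀ r ∈ s, r ≤ x)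
    (i : ℕ) : 0 ≤ (derivative^[i] (s.map fun a => X - C a).prod).eval x := by
  induction s using Multiset.induction_on generalizing i with
  | empty =>
    rcases i with _ | i
    · simp
    · simp [Function.iterate_succ_apply]
  | cons a s ih =>
    have hs' := ih fun r hr => hs r (Multiset.mem_cons_of_mem hr)
    rw [Multiset.map_cons, Multiset.prod_cons, mul_comm, iterate_derivative_mul_X_sub_C]
    simp only [eval_add, eval_mul, eval_sub, eval_X, eval_C, eval_smul]
    exact add_nonneg (mul_nonneg (hs' i) (sub_nonneg.2 (hs a (Multiset.mem_cons_self a s))))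
      (nsmul_nonneg (hs' (i - 1)) i)

end RealRooted

section RealPolynomial

variable {p : ℝ[X]}

lemma splits_derivative (hp : p.Splits) : (derivative p).Splits := by
  rw [splits_iff_card_roots] at hp ⊢
  rcases eq_or_ne p.natDegree 0 with h0 | h0
  · simp [derivative_of_natDegree_zero h0]
  · have hRolle := card_roots_le_derivative p
    have hcard := card_roots' (derivative p)
    have hdeg := natDegree_derivative_lt h0
    omega

lemma splits_iterate_derivative (hp : p.Splits) (j : ℕ) : (derivative^[j] p).Splits := by
  induction j with
  | zero => exact hp
  | succ j ih => simpa only [Function.iterate_succ_apply'] using splits_derivative ih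

lemma eval_iterate_derivative_mul_le_sq (hp : p.Splits) (j : ℕ) (x : ℝ) :
    (derivative^[j] p).eval x * (derivative^[j + 2] p).eval x ≤
      (derivative^[j + 1] p).eval x ^ 2 := by
  simpa only [Function.iterate_succ_apply'] using
    eval_mul_eval_derivative_derivative_le_sq (splits_iterate_derivative hp j) x

lemma eval_iterate_derivative_nonneg (hp : p.Splits) (hlead : 0 ≤ p.leadingCoeff) {x : ℝ}
    (hx : ∀ r ∈ p.roots, r ≤ x) (i : ℕ) : 0 ≤ (derivative^[i] p).eval x := by
  rw [hp.eq_prod_roots, iterate_derivative_C_mul, eval_C_mul]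
  exact mul_nonneg hlead (eval_iterate_derivative_prod_X_sub_C_nonneg hx i)

lemma leadingCoeff_iterate_derivative_nonneg (hlead : 0 ≤ p.leadingCoeff) (j : ℕ) :
    0 ≤ (derivative^[j] p).leadingCoeff := by
  induction j with
  | zero => exact hlead
  | succ j ih =>
    rw [Function.iterate_succ_apply', leadingCoeff_derivative]
    exact mul_nonneg ih (Nat.cast_nonneg _)

lemma hasDerivAt_eval_iterate_derivative (p : ℝ[X]) (j : ℕ) (x : ℝ) :
    HasDerivAt (fun t => (derivative^[j] p).eval t) ((derivative^[j + 1] p).eval x) x := by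
  simpa only [Function.iterate_succ_apply'] using (derivative^[j] p).hasDerivAt x

end RealPolynomial

/-! ### Derivatives of Chebyshev polynomials -/

lemma hasDerivAt_chebDeriv (m : ℤ) (j : ℕ) (x : ℝ) :
    HasDerivAt (chebDeriv m j) (chebDeriv m (j + 1) x) x :=
  hasDerivAt_eval_iterate_derivative _ j x

lemma isDerivTower_chebDeriv (s : Set ℝ) (n : ℕ) (m : ℤ) : IsDerivTower s n (chebDeriv m) :=
  fun i _ x _ => (hasDerivAt_chebDeriv m i x).hasDerivWithinAt

lemma splits_chebyshev_T (N : ℕ) : (Chebyshev.T ℝ N).Splits := by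
  rw [splits_iff_card_roots, Chebyshev.roots_T_real, Finset.image_val, Finset.range_val,
    Multiset.dedup_eq_self.2 (Chebyshev.roots_T_real_nodup N)]
  simp

section ChebDeriv

variable (N j : ℕ) (x : ℝ)

lemma chebDeriv_ode : (1 - x ^ 2) * chebDeriv N (j + 2) x =
    (2 * j + 1) * x * chebDeriv N (j + 1) x - ((N : ℝ) ^ 2 - (j : ℝ) ^ 2) * chebDeriv N j x := by
  simpa [chebDeriv] using Chebyshev.one_sub_X_sq_mul_iterate_derivative_T_eval (R := ℝ) (N : ℤ) j x

lemma chebDeriv_one_recurrence :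
    (2 * j + 1) * chebDeriv N (j + 1) 1 = ((N : ℝ) ^ 2 - (j : ℝ) ^ 2) * chebDeriv N j 1 := by
  linarith [chebDeriv_ode N j 1]

lemma chebDeriv_zero_one : chebDeriv N 0 1 = 1 := by simp [chebDeriv]

lemma chebDeriv_neg : chebDeriv N j (-x) = (-1) ^ (N + j) * chebDeriv N j x := by
  induction j generalizing x with
  | zero => simp [chebDeriv, Chebyshev.T_eval_neg]
  | succ j ih =>
    have hcomp := (hasDerivAt_chebDeriv N j (-x)).comp x (hasDerivAt_neg x)
    rw [show chebDeriv N j ∘ Neg.neg = fun y => (-1) ^ (N + j) * chebDeriv N j y from funext ih]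
      at hcomp
    have := hcomp.unique ((hasDerivAt_chebDeriv N j x).const_mul _)
    rw [← add_assoc, pow_succ]
    linarith

lemma abs_chebDeriv_abs : |chebDeriv N j (|x|)| = |chebDeriv N j x| := by
  rcases abs_choice x with h | h <;> simp [h, chebDeriv_neg, abs_mul]

variable {N j x}

lemma abs_chebDeriv_le (hx : |x| ≤ 1) : |chebDeriv N j x| ≤ chebDeriv N j 1 :=
  Chebyshev.abs_iterate_derivative_T_real_le (N : ℤ) j hx

lemma chebDeriv_self (N : ℕ) (x : ℝ) : chebDeriv N N x = sigmaN N := by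
  have hdeg : (Chebyshev.T ℝ N).natDegree = N := by simp
  have hconst : (derivative^[N] (Chebyshev.T ℝ N)).natDegree = 0 := by
    simpa [hdeg] using natDegree_iterate_derivative (Chebyshev.T ℝ N) N
  have hlead : (Chebyshev.T ℝ N).coeff N = 2 ^ (N - 1) := by
    simpa only [leadingCoeff, hdeg, Int.natAbs_natCast] using Chebyshev.leadingCoeff_T ℝ N
  rw [chebDeriv, eq_C_of_natDegree_eq_zero hconst, eval_C, coeff_iterate_derivative, zero_add,
    Nat.descFactorial_self, hlead, nsmul_eq_mul, sigmaN, mul_comm]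

lemma chebDeriv_eq_zero (h : N < j) : chebDeriv N j x = 0 := by
  rw [chebDeriv, iterate_derivative_eq_zero (by simpa using h), eval_zero]

lemma sigmaN_pos (N : ℕ) : 0 < sigmaN N := by
  unfold sigmaN
  positivity

lemma sigmaN_succ (hN : N ≠ 0) : sigmaN (N + 1) = 2 * (N + 1) * sigmaN N := by
  obtain ⟨M, rfl⟩ := Nat.exists_eq_succ_of_ne_zero hN
  simp only [sigmaN, Nat.succ_eq_add_one, Nat.add_sub_cancel, Nat.factorial_succ (M + 1), pow_succ]
  push_cast
  ring

lemma chebDeriv_pred_self (N : ℕ) (x : ℝ) :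
    chebDeriv ((N + 1 : ℕ) : ℤ) N x = x * sigmaN (N + 1) := by
  have hode := chebDeriv_ode (N + 1) N x
  rw [chebDeriv_eq_zero (by omega), chebDeriv_self] at hode
  push_cast at hode ⊢
  have : (2 * (N : ℝ) + 1) ≠ 0 := by positivity
  apply mul_left_cancel₀ this
  linear_combination hode

lemma chebDeriv_pos_of_one_le (hj : j ≤ N) (hx : 1 ≤ x) : 0 < chebDeriv N j x := by
  induction hj using Nat.decreasingInduction generalizing x with
  | self => exact (chebDeriv_self N x).symm ▸ sigmaN_pos N
  | of_succ j hj ih =>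
    have hjN : (j : ℝ) + 1 ≤ N := by exact_mod_cast hj
    have hrec := chebDeriv_one_recurrence N j
    have hone : 0 < chebDeriv N j 1 := by
      refine pos_of_mul_pos_right (a := (N : ℝ) ^ 2 - (j : ℝ) ^ 2) ?_ (by nlinarith)
      rw [← hrec]
      have := ih le_rfl
      positivity
    exact hone.trans_le (le_of_hasDerivWithinAt_nonneg hx
      (fun t _ => (hasDerivAt_chebDeriv N j t).hasDerivWithinAt) fun t ht => (ih ht.1).le)

lemma chebDeriv_one_pos (hj : j ≤ N) : 0 < chebDeriv N j 1 := chebDeriv_pos_of_one_le hj le_rfl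

lemma chebDeriv_zero_node {i : ℕ} (h : i ≤ N) :
    chebDeriv N 0 (Chebyshev.node N i) = (-1) ^ i := by
  simpa [chebDeriv] using Chebyshev.eval_T_real_node (n := N) (i := i) (by simpa using h)

lemma chebDeriv_one_node {i : ℕ} (h0 : i ≠ 0) (h : i < N) :
    chebDeriv N 1 (Chebyshev.node N i) = 0 :=
  (Chebyshev.isLocalExtr_T_real (n := N) (k := i) (by omega) (by omega) h).hasDerivAt_eq_zero
    (hasDerivAt_chebDeriv N 0 _)

lemma chebDeriv_mul_le_sq (N j : ℕ) (x : ℝ) :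
    chebDeriv N j x * chebDeriv N (j + 2) x ≤ chebDeriv N (j + 1) x ^ 2 :=
  eval_iterate_derivative_mul_le_sq (splits_chebyshev_T N) j x

lemma chebDeriv_succ_one (hj : j ≤ N) :
    chebDeriv ((N + 1 : ℕ) : ℤ) j 1 * (N * (N + 1 - j)) =
      chebDeriv N j 1 * ((N + 1) * (N + j)) := by
  induction j with
  | zero => simp only [chebDeriv_zero_one]; push_cast; ring
  | succ j ih =>
    have hrec := chebDeriv_one_recurrence N j
    have hrec' := chebDeriv_one_recurrence (N + 1) j
    have hodd : (2 * (j : ℝ) + 1) ≠ 0 := by positivity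
    simp only [Nat.cast_add, Nat.cast_one] at hrec' ih ⊢
    apply mul_left_cancel₀ hodd
    linear_combination (N : ℝ) * (N + 1 - (j + 1)) * hrec' - ((N : ℝ) + 1) * (N + (j + 1)) * hrec +
      (N + 1 + j) * (N - j) * ih (by omega)

/-- By the differential equation, two consecutive vanishing derivatives force all later ones to
vanish, including the constant one of order `N`. -/
lemma chebDeriv_succ_ne_zero (hj : j ≤ N) (hx : 1 - x ^ 2 ≠ 0) (h0 : chebDeriv N j x = 0) :
    chebDeriv N (j + 1) x ≠ 0 := by
  intro h1
  have vanish : ∀ i, chebDeriv N (j + i) x = 0 ∧ chebDeriv N (j + i + 1) x = 0 := by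
    intro i
    induction i with
    | zero => exact ⟨h0, h1⟩
    | succ i ih =>
      refine ⟨ih.2, ?_⟩
      have hode := chebDeriv_ode N (j + i) x
      rw [ih.1, ih.2, mul_zero, mul_zero, sub_zero] at hode
      exact (mul_eq_zero.1 hode).resolve_left hx
  have htop := (vanish (N - j)).1
  rw [Nat.add_sub_cancel' hj, chebDeriv_self] at htop
  exact (sigmaN_pos N).ne' htop

/-- Sonin's energy function. -/
lemma chebDeriv_energy_le {a b : ℝ} (ha : 0 ≤ a) (hab : a ≤ b) :
    ((N : ℝ) ^ 2 - (j : ℝ) ^ 2) * chebDeriv N j a ^ 2 + (1 - a ^ 2) * chebDeriv N (j + 1) a ^ 2 ≤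
      ((N : ℝ) ^ 2 - (j : ℝ) ^ 2) * chebDeriv N j b ^ 2 +
        (1 - b ^ 2) * chebDeriv N (j + 1) b ^ 2 := by
  refine le_of_hasDerivWithinAt_nonneg (g := fun t => ((N : ℝ) ^ 2 - (j : ℝ) ^ 2) *
      chebDeriv N j t ^ 2 + (1 - t ^ 2) * chebDeriv N (j + 1) t ^ 2)
    (g' := fun t => 4 * j * t * chebDeriv N (j + 1) t ^ 2) hab (fun t _ => ?_) fun t ht => ?_
  · refine (((((hasDerivAt_chebDeriv N j t).pow 2).const_mul ((N : ℝ) ^ 2 - (j : ℝ) ^ 2)).add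
      (((hasDerivAt_pow 2 t).const_sub 1).mul
        ((hasDerivAt_chebDeriv N (j + 1) t).pow 2))).congr_deriv ?_).hasDerivWithinAt
    norm_num
    linear_combination (2 * chebDeriv N (j + 1) t) * chebDeriv_ode N j t
  · have : 0 ≤ t := ha.trans ht.1
    positivity

end ChebDeriv

/-! ### The largest zero of a derivative of `T_N` -/

/-- `ζ` is the largest zero of `T_N^{(j)}`. It separates the central zone `|x| ≤ ζ` from the outer
zone `ζ ≤ x`, where all higher derivatives are nonnegative. -/
def IsLargestZero (N j : ℕ) (ζ : ℝ) : Prop := IsGreatest {x | chebDeriv N j x = 0} ζ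

lemma exists_isLargestZero {N j : ℕ} (hj : j < N) : ∃ ζ, IsLargestZero N j ζ := by
  set p := derivative^[j] (Chebyshev.T ℝ N) with hp
  have hdeg : p.natDegree ≠ 0 := by
    intro h
    have hpos := chebDeriv_one_pos (Nat.succ_le_of_lt hj)
    rw [chebDeriv, Function.iterate_succ_apply', derivative_of_natDegree_zero h, eval_zero] at hpos
    exact hpos.false
  have hp0 : p ≠ 0 := by rintro h; simp [h] at hdeg
  have hset : {x | chebDeriv N j x = 0} = (p.roots.toFinset : Set ℝ) := by
    ext x
    simp [chebDeriv, ← hp, hp0]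
  obtain ⟨r, hr⟩ := (splits_iterate_derivative (splits_chebyshev_T N) j).exists_eval_eq_zero
    fun h => hdeg (natDegree_eq_of_degree_eq_some h)
  have hne : p.roots.toFinset.Nonempty := ⟨r, by simpa [hp0] using hr⟩
  exact ⟨_, by rw [IsLargestZero, hset]; exact p.roots.toFinset.isGreatest_max' hne⟩

namespace IsLargestZero

variable {N j : ℕ} {ζ x : ℝ}

lemma chebDeriv_eq_zero (h : IsLargestZero N j ζ) : chebDeriv N j ζ = 0 := h.1

lemma nonneg (h : IsLargestZero N j ζ) : 0 ≤ ζ := by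
  have : chebDeriv N j (-ζ) = 0 := by rw [chebDeriv_neg, h.chebDeriv_eq_zero, mul_zero]
  linarith [h.2 this]

lemma index_lt (h : IsLargestZero N j ζ) : j < N := by
  by_contra! hj
  rcases hj.eq_or_lt with rfl | hj
  · exact (sigmaN_pos N).ne' ((chebDeriv_self N ζ).symm.trans h.chebDeriv_eq_zero)
  · linarith [h.2 (_root_.chebDeriv_eq_zero (x := ζ + 1) hj)]

lemma lt_one (h : IsLargestZero N j ζ) : ζ < 1 := by
  by_contra! h1
  exact (chebDeriv_pos_of_one_le h.index_lt.le h1).ne' h.chebDeriv_eq_zero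

lemma one_sub_sq_pos (h : IsLargestZero N j ζ) : 0 < 1 - ζ ^ 2 := by
  nlinarith [h.nonneg, h.lt_one]

lemma chebDeriv_nonneg (h : IsLargestZero N j ζ) (hx : ζ ≤ x) {i : ℕ} (hi : j ≤ i) :
    0 ≤ chebDeriv N i x := by
  have hlead : 0 ≤ (derivative^[j] (Chebyshev.T ℝ N)).leadingCoeff :=
    leadingCoeff_iterate_derivative_nonneg (by rw [Chebyshev.leadingCoeff_T]; positivity) j
  have hroots : ∀ r ∈ (derivative^[j] (Chebyshev.T ℝ N)).roots, r ≤ x :=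
    fun r hr => (h.2 (isRoot_of_mem_roots hr)).trans hx
  have := eval_iterate_derivative_nonneg (splits_iterate_derivative (splits_chebyshev_T N) j)
    hlead hroots (i - j)
  rwa [← Function.iterate_add_apply, Nat.sub_add_cancel hi] at this

lemma chebDeriv_le (h : IsLargestZero N j ζ) {i : ℕ} (hi : j ≤ i + 1) {y : ℝ} (hx : ζ ≤ x)
    (hxy : x ≤ y) : chebDeriv N i x ≤ chebDeriv N i y :=
  le_of_hasDerivWithinAt_nonneg hxy (fun t _ => (hasDerivAt_chebDeriv N i t).hasDerivWithinAt)
    fun _ ht => h.chebDeriv_nonneg (hx.trans ht.1) hi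

/-- A second-order Taylor expansion of `T_N^{(j)}` at `ζ`, evaluated at `1`. -/
lemma one_sub_sq_mul_chebDeriv_succ_le (hj : j ≠ 0) (h : IsLargestZero N j ζ) :
    (1 - ζ ^ 2) * chebDeriv N (j + 1) ζ ≤ chebDeriv N j 1 := by
  have h0 := h.nonneg
  have h1 := h.lt_one
  have hode := h.chebDeriv_eq_zero ▸ chebDeriv_ode N j ζ
  rcases Nat.lt_or_ge 1 j with hj1 | hj1
  · have htaylor := IsDerivTower.taylor_two_le (D := fun i => chebDeriv N (i + j)) h1.le
      ((isDerivTower_chebDeriv _ _ _).shift) (c := chebDeriv N (j + 2) ζ)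
      fun x hx => add_comm 2 j ▸ h.chebDeriv_le (by omega) le_rfl hx.1
    simp only [zero_add, h.chebDeriv_eq_zero, add_comm 1 j] at htaylor
    have hu := h.chebDeriv_nonneg le_rfl j.le_succ
    set u := chebDeriv N (j + 1) ζ
    have hj2 : (2 : ℝ) ≤ j := by exact_mod_cast hj1
    have hgap : 0 ≤ (1 - ζ) * u * (ζ * ((2 * j + 1) / 2 - 1 - ζ)) :=
      mul_nonneg (mul_nonneg (by linarith) hu) (mul_nonneg h0 (by linarith))
    refine le_of_mul_le_mul_left (a := 1 + ζ) ?_ (by linarith)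
    nlinarith
  · obtain rfl : j = 1 := by omega
    have hode' := h.chebDeriv_eq_zero ▸ chebDeriv_ode N 0 ζ
    have hrec := chebDeriv_one_recurrence N 0
    rw [chebDeriv_zero_one] at hrec
    norm_num at hode' hrec
    rw [hode', hrec]
    have := (abs_le.1 ((abs_chebDeriv_le (N := N) (j := 0) (abs_le.2 ⟨by linarith, h1.le⟩)).trans_eq
      (chebDeriv_zero_one N))).1
    nlinarith [sq_nonneg (N : ℝ)]

lemma mul_abs_chebDeriv_pred_le {k : ℕ} (h : IsLargestZero N (k + 1) ζ) (hx : |x| ≤ ζ) :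
    ((N : ℝ) ^ 2 - (k : ℝ) ^ 2) * |chebDeriv N k x| ≤ chebDeriv N (k + 1) 1 := by
  have hkN : (k : ℝ) + 1 < N := by exact_mod_cast h.index_lt
  have hpos : 0 < (N : ℝ) ^ 2 - (k : ℝ) ^ 2 := by nlinarith [k.cast_nonneg (α := ℝ)]
  have hle : |chebDeriv N k x| ≤ |chebDeriv N k ζ| := by
    have henergy := chebDeriv_energy_le (N := N) (j := k) (abs_nonneg x) hx
    rw [h.chebDeriv_eq_zero] at henergy
    have hrest : 0 ≤ (1 - |x| ^ 2) * chebDeriv N (k + 1) (|x|) ^ 2 :=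
      mul_nonneg (by nlinarith [abs_nonneg x, h.lt_one]) (sq_nonneg _)
    rw [← abs_chebDeriv_abs N k x, ← sq_le_sq]
    exact le_of_mul_le_mul_left (by linarith) hpos
  have hode : |(1 - ζ ^ 2) * chebDeriv N (k + 2) ζ| =
      ((N : ℝ) ^ 2 - (k : ℝ) ^ 2) * |chebDeriv N k ζ| := by
    rw [chebDeriv_ode, h.chebDeriv_eq_zero, mul_zero, zero_sub, abs_neg, abs_mul, abs_of_pos hpos]
  calc ((N : ℝ) ^ 2 - (k : ℝ) ^ 2) * |chebDeriv N k x|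
      ≤ ((N : ℝ) ^ 2 - (k : ℝ) ^ 2) * |chebDeriv N k ζ| := mul_le_mul_of_nonneg_left hle hpos.le
    _ = (1 - ζ ^ 2) * chebDeriv N (k + 2) ζ := by
      rw [← hode, abs_of_nonneg]
      exact mul_nonneg h.one_sub_sq_pos.le (h.chebDeriv_nonneg le_rfl (by omega))
    _ ≤ chebDeriv N (k + 1) 1 := h.one_sub_sq_mul_chebDeriv_succ_le k.succ_ne_zero

lemma mul_abs_chebDeriv_le_of_succ {k : ℕ} {ξ : ℝ} (h : IsLargestZero N (k + 1) ξ)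
    (hx : |x| ≤ ξ) : (2 * k + 1) * |chebDeriv N k x| ≤ chebDeriv N k 1 := by
  have hkN : (k : ℝ) + 1 < N := by exact_mod_cast h.index_lt
  have hpos : 0 < (N : ℝ) ^ 2 - (k : ℝ) ^ 2 := by nlinarith [k.cast_nonneg (α := ℝ)]
  refine le_of_mul_le_mul_left ?_ hpos
  calc _ = (2 * (k : ℝ) + 1) * (((N : ℝ) ^ 2 - (k : ℝ) ^ 2) * |chebDeriv N k x|) := by ring
    _ ≤ (2 * k + 1) * chebDeriv N (k + 1) 1 :=
      mul_le_mul_of_nonneg_left (h.mul_abs_chebDeriv_pred_le hx) (by positivity)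
    _ = _ := chebDeriv_one_recurrence N k

/-- Between the largest zeros `ξ` of `T_N^{(j+1)}` and `ζ` of `T_N^{(j)}` the function `T_N^{(j)}`
increases to `0`, so the bound at `ξ` suffices. -/
lemma mul_abs_chebDeriv_le (h : IsLargestZero N j ζ) (hx : |x| ≤ ζ) :
    (2 * j + 1) * |chebDeriv N j x| ≤ chebDeriv N j 1 := by
  rcases (Nat.succ_le_of_lt h.index_lt).eq_or_lt with rfl | hj
  · have hroot := h.chebDeriv_eq_zero
    rw [Nat.succ_eq_add_one, chebDeriv_pred_self] at hroot
    obtain rfl : ζ = 0 := (mul_eq_zero.1 hroot).resolve_right (sigmaN_pos _).ne'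
    obtain rfl : x = 0 := abs_nonpos_iff.1 hx
    rw [h.chebDeriv_eq_zero, abs_zero, mul_zero]
    exact (chebDeriv_one_pos (by omega)).le
  · obtain ⟨ξ, hξ⟩ := exists_isLargestZero hj
    rcases le_total |x| ξ with hxξ | hxξ
    · exact hξ.mul_abs_chebDeriv_le_of_succ hxξ
    · have hlow := hξ.chebDeriv_le le_rfl le_rfl hxξ
      have hhigh := (hξ.chebDeriv_le le_rfl hxξ hx).trans_eq h.chebDeriv_eq_zero
      have hbound := hξ.mul_abs_chebDeriv_le_of_succ (abs_of_nonneg hξ.nonneg).le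
      rw [abs_of_nonpos (hlow.trans hhigh)] at hbound
      rw [← abs_chebDeriv_abs, abs_of_nonpos hhigh]
      exact (mul_le_mul_of_nonneg_left (neg_le_neg hlow) (by positivity)).trans hbound

end IsLargestZero

/-! ### Algebraic inequalities -/

/-- The constant `γ` for which `T_{N+1}^{(K)}(1) = (1 + (2/N) γ) T_N^{(K)}(1)`; see
`chebDeriv_succ_one_eq_endpointGamma`. -/
noncomputable def endpointGamma (N K : ℝ) : ℝ := K * (2 * N + 1) / (2 * (N + 1 - K))

section AlgebraicInequalities

variable {N K q u w y c U : ℝ}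

lemma add_le_endpointGamma (hK : 1 ≤ K) (hN : K + 1 ≤ N) :
    K * (K - 1) / (N ^ 2 - (K - 1) ^ 2) + K * (N / (N + 1 - K)) ≤ endpointGamma N K := by
  have h1 : 0 < N + 1 - K := by linarith
  have h2 : 0 < N + K - 1 := by linarith
  have hsub : endpointGamma N K - (K * (K - 1) / (N ^ 2 - (K - 1) ^ 2) + K * (N / (N + 1 - K))) =
      K * (N - K + 1) / (2 * (N + 1 - K) * (N + K - 1)) := by
    rw [show N ^ 2 - (K - 1) ^ 2 = (N + 1 - K) * (N + K - 1) by ring, endpointGamma]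
    field_simp
    ring
  have h3 : 0 ≤ K * (N - K + 1) / (2 * (N + 1 - K) * (N + K - 1)) :=
    div_nonneg (mul_nonneg (by linarith) (by linarith)) (by positivity)
  linarith

lemma one_le_div_sub (hK : 1 ≤ K) (hN : K + 1 ≤ N) : 1 ≤ N / (N + 1 - K) := by
  rw [one_le_div] <;> linarith

lemma neg_endpointGamma_le (hK : 1 ≤ K) (hN : K + 1 ≤ N) :
    -endpointGamma N K ≤
      K * (K - 1) * (2 * K - 1) / (N ^ 2 - (K - 1) ^ 2) -
        K ^ 2 * (2 * K + 1) / (N ^ 2 - K ^ 2) := by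
  obtain ⟨a, rfl⟩ : ∃ a, K = a + 1 := ⟨K - 1, by ring⟩
  obtain ⟨b, rfl⟩ : ∃ b, N = a + 2 + b := ⟨N - a - 2, by ring⟩
  have ha : 0 ≤ a := by linarith
  have hb : 0 ≤ b := by linarith
  rw [← sub_nonneg]
  have hsub : (a + 1) * (a + 1 - 1) * (2 * (a + 1) - 1) / ((a + 2 + b) ^ 2 - (a + 1 - 1) ^ 2) -
        (a + 1) ^ 2 * (2 * (a + 1) + 1) / ((a + 2 + b) ^ 2 - (a + 1) ^ 2) -
        -endpointGamma (a + 2 + b) (a + 1) =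
      (a + 1) * (2 * a * (2 * a + 1) * ((b + 1) * (2 * a + 3 + b)) -
          2 * (a + 1) * (2 * a + 3) * ((b + 2) * (2 * a + 2 + b)) +
          (2 * a + 2 * b + 5) * ((2 * a + 2 + b) * ((b + 1) * (2 * a + 3 + b)))) /
        (2 * (b + 2) * (2 * a + 2 + b) * (b + 1) * (2 * a + 3 + b)) := by
    rw [endpointGamma, show (a + 2 + b) ^ 2 - (a + 1 - 1) ^ 2 = (b + 2) * (2 * a + 2 + b) by ring,
      show (a + 2 + b) ^ 2 - (a + 1) ^ 2 = (b + 1) * (2 * a + 3 + b) by ring,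
      show a + 2 + b + 1 - (a + 1) = b + 2 by ring]
    field_simp
    ring
  rw [hsub]
  refine div_nonneg (mul_nonneg (by linarith) ?_) (by positivity)
  ring_nf
  positivity

lemma correction_le_of_le (hK : 1 ≤ K) (hN : K + 1 ≤ N) (hU : 0 ≤ U)
    (hy : -U ≤ (N ^ 2 - (K - 1) ^ 2) * y)
    (h : K * q * u + (K + 1) * ((K * u - q * w) * c) ≤ K * (N / (N + 1 - K)) * U) :
    (K + 1) * ((K * u - q * w) * c) - K * ((K - 1) * y - q * u) ≤ endpointGamma N K * U := by
  have hL : 0 < N ^ 2 - (K - 1) ^ 2 := by nlinarith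
  have hy' : -y ≤ U / (N ^ 2 - (K - 1) ^ 2) := by
    rw [le_div_iff₀ hL]
    linarith
  have h1 : K * (K - 1) * (-y) ≤ K * (K - 1) / (N ^ 2 - (K - 1) ^ 2) * U := by
    rw [div_mul_eq_mul_div, mul_div_assoc]
    exact mul_le_mul_of_nonneg_left hy' (by nlinarith)
  have h2 := mul_le_mul_of_nonneg_right (add_le_endpointGamma hK hN) hU
  linarith

section SameSign

variable (hK : 1 ≤ K) (hN : K + 1 ≤ N) (hq0 : 0 < q) (hq2 : q < 2) (hu : 0 ≤ u) (hw : 0 ≤ w)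
  (hc : c * ((N ^ 2 - K ^ 2) * u + (1 + K * q) * w) = (2 - q) * (K * u - q * w))
include hK hN hq0 hq2 hu hw hc

lemma mul_sub_mul_le_of_nonneg (hc0 : 0 ≤ c) :
    (K + 1) * ((K * u - q * w) * c) ≤ K * (2 - q) * (N / (N + 1 - K)) * u := by
  have hM : 0 < N ^ 2 - K ^ 2 := by nlinarith
  have hratio : (K + 1) * K / (N ^ 2 - K ^ 2) ≤ N / (N + 1 - K) := by
    obtain ⟨a, rfl⟩ : ∃ a, K = a + 1 := ⟨K - 1, by ring⟩
    obtain ⟨b, rfl⟩ : ∃ b, N = a + 2 + b := ⟨N - a - 2, by ring⟩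
    have ha : 0 ≤ a := by linarith
    have hb : 0 ≤ b := by linarith
    rw [div_le_div_iff₀ hM (by linarith), ← sub_nonneg]
    ring_nf
    positivity
  have hcu : c * u ≤ (2 - q) * K * u / (N ^ 2 - K ^ 2) := by
    rw [le_div_iff₀ hM]
    have h1 : 0 ≤ c * ((1 + K * q) * w) := by positivity
    have h2 : 0 ≤ (2 - q) * (q * w) := mul_nonneg (by linarith) (by positivity)
    linarith
  calc (K + 1) * ((K * u - q * w) * c)
      ≤ (K + 1) * K * (c * u) := by nlinarith [mul_nonneg (mul_nonneg hq0.le hw) hc0]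
    _ ≤ (K + 1) * K * ((2 - q) * K * u / (N ^ 2 - K ^ 2)) :=
      mul_le_mul_of_nonneg_left hcu (by nlinarith)
    _ = K * (2 - q) * u * ((K + 1) * K / (N ^ 2 - K ^ 2)) := by ring
    _ ≤ K * (2 - q) * u * (N / (N + 1 - K)) :=
      mul_le_mul_of_nonneg_left hratio
        (mul_nonneg (mul_nonneg (by linarith) (by linarith)) hu)
    _ = K * (2 - q) * (N / (N + 1 - K)) * u := by ring

lemma correction_le_of_nonneg (hc0 : 0 ≤ c) (huU : 2 * u ≤ U)
    (hy : -U ≤ (N ^ 2 - (K - 1) ^ 2) * y) :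
    (K + 1) * ((K * u - q * w) * c) - K * ((K - 1) * y - q * u) ≤ endpointGamma N K * U := by
  refine correction_le_of_le hK hN (by linarith) hy ?_
  have hR := one_le_div_sub hK hN
  have h1 := mul_sub_mul_le_of_nonneg hK hN hq0 hq2 hu hw hc hc0
  set R := N / (N + 1 - K)
  have h2 : 0 ≤ K * q * u * (R - 1) := mul_nonneg (by positivity) (by linarith)
  have h3 : K * R * (2 * u) ≤ K * R * U := mul_le_mul_of_nonneg_left huU (by positivity)
  linarith

end SameSign

section OppositeSign

lemma neg_mul_mul_le_of_nonpos (hK : 1 ≤ K) (hN : K + 1 ≤ N) (hu : 0 ≤ u) (hc0 : c ≤ 0)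
    (hc : c * ((N ^ 2 - K ^ 2) * u + (1 + K * q) * w) = (2 - q) * (K * u - q * w))
    (hy : -U ≤ (N ^ 2 - (K - 1) ^ 2) * y)
    (hode : (N ^ 2 - (K - 1) ^ 2) * y = (2 * K - 1) * (1 - q) * u - q * (2 - q) * w) :
    -(c * w) * (1 + K * q) ≤ U - u * (1 + (K - 1) * q) := by
  have : 0 ≤ -c * ((N ^ 2 - K ^ 2) * u) :=
    mul_nonneg (by linarith) (mul_nonneg (by nlinarith) hu)
  linarith

variable (hK : 1 ≤ K) (hq0 : 0 < q) (huU : u ≤ U)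
  (he : -(c * w) * (1 + K * q) ≤ U - u * (1 + (K - 1) * q))
include hK hq0 huU he

lemma sub_mul_le_of_neg_mul_mul_le (hU : 0 ≤ U) : u - c * w ≤ U := by
  refine le_of_mul_le_mul_right (a := 1 + K * q) ?_ (by positivity)
  have h1 : 0 ≤ (U - u) * q := mul_nonneg (by linarith) hq0.le
  have h2 : 0 ≤ (K - 1) * U * q := mul_nonneg (mul_nonneg (by linarith) hU) hq0.le
  linarith

lemma correction_le_of_nonpos (hN : K + 1 ≤ N) (hq2 : q < 2) (hu : 0 ≤ u) (hc0 : c ≤ 0)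
    (hKq : q ≤ 1 ∨ 2 ≤ K) (hy : -U ≤ (N ^ 2 - (K - 1) ^ 2) * y) :
    (K + 1) * ((K * u - q * w) * c) - K * ((K - 1) * y - q * u) ≤ endpointGamma N K * U := by
  have hU : 0 ≤ U := hu.trans huU
  refine correction_le_of_le hK hN hU hy ?_
  have huc : 0 ≤ (K + 1) * (K * u * -c) :=
    mul_nonneg (by linarith) (mul_nonneg (by positivity) (by linarith))
  have hcore : K * q * u + (K + 1) * q * -(c * w) ≤ K * U := by
    refine le_of_mul_le_mul_right (a := 1 + K * q) ?_ (by positivity)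
    have h1 := mul_le_mul_of_nonneg_left he (by positivity : 0 ≤ (K + 1) * q)
    have h2 : q * ((K + 1) * U + u * (q - 1)) ≤ (K + K ^ 2 * q) * U := by
      rcases hKq with hq1 | hK2
      · have h3 : 0 ≤ q * u * (1 - q) := mul_nonneg (by positivity) (by linarith)
        have h4 : 0 ≤ (K * (1 - q) + (K ^ 2 - 1) * q) * U := by
          refine mul_nonneg (add_nonneg ?_ ?_) hU <;> nlinarith
        linarith
      · have h3 : 0 ≤ q * (u * (2 - q) + (U - u)) :=
          mul_nonneg hq0.le (add_nonneg (mul_nonneg hu (by linarith)) (by linarith))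
        have h4 : 0 ≤ (K + (K - 2) * (K + 1) * q) * U :=
          mul_nonneg (add_nonneg (by linarith)
            (mul_nonneg (mul_nonneg (by linarith) (by linarith)) hq0.le)) hU
        linarith
    linarith
  have hR : K * U ≤ K * (N / (N + 1 - K)) * U := by
    rw [mul_assoc]
    exact mul_le_mul_of_nonneg_left (le_mul_of_one_le_left hU (one_le_div_sub hK hN)) (by linarith)
  linarith

end OppositeSign

lemma sub_mul_add_correction_le (hN : 3 ≤ N) (hq0 : 0 < q) (hq2 : q < 2) (hu : 0 ≤ u)
    (huU : 3 * u ≤ U) (hc0 : c ≤ 0) (he : -(c * w) * (1 + q) ≤ U - u) :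
    (u - c * w) + 2 / N * (2 * ((u - q * w) * c) + q * u) ≤
      U * (1 + 2 / N * endpointGamma N 1) := by
  have hU : 0 ≤ U := by linarith
  have hγ : 1 ≤ endpointGamma N 1 := by
    rw [endpointGamma, one_le_div] <;> linarith
  have hcore : 2 * ((q - 1) * (U + u * q)) ≤ (U - u) * q * N := by
    have h1 : 0 ≤ (U - u) * q * (N - 3) :=
      mul_nonneg (mul_nonneg (by linarith) hq0.le) (by linarith)
    nlinarith [mul_nonneg (mul_nonneg hu hq0.le) (by linarith : 0 ≤ 2 - q),
      mul_nonneg (by linarith : 0 ≤ U - 3 * u) hq0.le]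
  have hmain : 2 * (2 * ((u - q * w) * c) + q * u - U) ≤ (U - (u - c * w)) * N := by
    refine le_of_mul_le_mul_right (a := 1 + q) ?_ (by linarith)
    have h1 : 0 ≤ u * -c * (1 + q) := mul_nonneg (mul_nonneg hu (by linarith)) (by linarith)
    have h2 := mul_le_mul_of_nonneg_left he hq0.le
    have h3 := mul_le_mul_of_nonneg_right he (by linarith : 0 ≤ N)
    linarith
  have hγU := mul_le_mul_of_nonneg_right hγ hU
  have hN0 : 0 < N := by linarith
  have hdiv : 2 / N * (2 * ((u - q * w) * c) + q * u - U) ≤ U - (u - c * w) := by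
    rwa [div_mul_eq_mul_div, div_le_iff₀ hN0]
  have hγdiv := mul_le_mul_of_nonneg_left hγU (by positivity : 0 ≤ 2 / N)
  linarith

end AlgebraicInequalities

/-! ### The perturbations `ν` and `ω` -/

/-- The `j`-th derivative of `ν = (X - 1) T_N'`, which vanishes at all extremal nodes of `T_N`
except `-1`. -/
noncomputable def nuDeriv (N j : ℕ) (x : ℝ) : ℝ :=
  (derivative^[j] (derivative (Chebyshev.T ℝ N) * (X - C 1))).eval x

/-- The `j`-th derivative of `ω = T_{N+1} - T_{N-1} = (2/N) (X² - 1) T_N'`, which vanishes at all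
extremal nodes of `T_N`. -/
noncomputable def omegaDeriv (N j : ℕ) (x : ℝ) : ℝ :=
  chebDeriv (N + 1 : ℕ) j x - chebDeriv (N - 1 : ℤ) j x

section Perturbations

variable {N : ℕ} (j : ℕ) (x : ℝ)

lemma nuDeriv_eq : nuDeriv N j x = (x - 1) * chebDeriv N (j + 1) x + j * chebDeriv N j x := by
  rw [nuDeriv, iterate_derivative_mul_X_sub_C, ← Function.iterate_succ_apply derivative,
    ← Function.iterate_succ_apply derivative]
  rcases j with _ | j
  · simp [chebDeriv, mul_comm]
  · simp [chebDeriv, mul_comm]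

lemma hasDerivAt_nuDeriv : HasDerivAt (nuDeriv N j) (nuDeriv N (j + 1) x) x :=
  hasDerivAt_eval_iterate_derivative _ j x

lemma nuDeriv_mul_le_sq : nuDeriv N j x * nuDeriv N (j + 2) x ≤ nuDeriv N (j + 1) x ^ 2 :=
  eval_iterate_derivative_mul_le_sq
    ((splits_derivative (splits_chebyshev_T N)).mul (Splits.X_sub_C 1)) j x

lemma one_add_mul_nuDeriv_succ : (1 + x) * nuDeriv N (j + 1) x =
    ((N : ℝ) ^ 2 - (j : ℝ) ^ 2) * chebDeriv N j x +
      (1 + j * (1 - x)) * chebDeriv N (j + 1) x := by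
  rw [nuDeriv_eq]
  push_cast
  linear_combination -chebDeriv_ode N j x

lemma nuDeriv_one : nuDeriv N j 1 = j * chebDeriv N j 1 := by rw [nuDeriv_eq]; ring

lemma isDerivTower_nuDeriv (s : Set ℝ) (n : ℕ) : IsDerivTower s n (nuDeriv N) :=
  fun i _ x _ => (hasDerivAt_nuDeriv i x).hasDerivWithinAt

lemma isDerivTower_omegaDeriv (s : Set ℝ) (n : ℕ) : IsDerivTower s n (omegaDeriv N) :=
  (isDerivTower_chebDeriv s n _).sub (isDerivTower_chebDeriv s n _)

variable {j x}

lemma nuDeriv_zero_node {i : ℕ} (h : i < N) : nuDeriv N 0 (Chebyshev.node N i) = 0 := by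
  rcases Nat.eq_zero_or_pos i with rfl | h0
  · rw [Chebyshev.node_eq_one, nuDeriv_one, Nat.cast_zero, zero_mul]
  · rw [nuDeriv_eq, chebDeriv_one_node h0.ne' h, Nat.cast_zero, mul_zero, zero_mul, add_zero]

lemma mul_omegaDeriv (N j : ℕ) (x : ℝ) : N * omegaDeriv N j x =
    2 * ((1 + x) * nuDeriv N j x + j * nuDeriv N (j - 1) x) := by
  have hpoly : C (N : ℝ) * (Chebyshev.T ℝ (N + 1 : ℕ) - Chebyshev.T ℝ (N - 1 : ℤ)) =
      C 2 * (derivative (Chebyshev.T ℝ N) * (X - C 1) * (X - C (-1))) := by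
    have h := Chebyshev.one_sub_X_sq_mul_derivative_T_eq_poly_in_T (R := ℝ) (N - 1 : ℤ)
    have hrec := Chebyshev.T_add_one ℝ (N : ℤ)
    simp only [sub_add_cancel, Int.cast_sub, Int.cast_natCast, Int.cast_one] at h
    simp only [Nat.cast_add, Nat.cast_one, map_neg, map_one, map_natCast, map_ofNat]
    linear_combination (N : ℝ[X]) * hrec + 2 * h
  have h := congrArg (fun p => (derivative^[j] p).eval x) hpoly
  rw [iterate_derivative_C_mul, iterate_derivative_C_mul, iterate_derivative_mul_X_sub_C,
    iterate_derivative_sub, nsmul_eq_mul] at h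
  simp only [eval_mul, eval_sub, eval_add, eval_natCast, eval_C, eval_X] at h
  rw [omegaDeriv, chebDeriv, chebDeriv, h, nuDeriv, nuDeriv, sub_neg_eq_add, add_comm x,
    mul_comm (1 + x)]

lemma omegaDeriv_eq (hN : N ≠ 0) (j : ℕ) (x : ℝ) : omegaDeriv N j x =
    2 / N * ((1 + x) * nuDeriv N j x + j * nuDeriv N (j - 1) x) := by
  have : (N : ℝ) ≠ 0 := Nat.cast_ne_zero.2 hN
  rw [div_mul_eq_mul_div, ← mul_omegaDeriv, mul_div_cancel_left₀ _ this]

lemma omegaDeriv_zero_node (hN : N ≠ 0) {i : ℕ} (h : i ≤ N) :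
    omegaDeriv N 0 (Chebyshev.node N i) = 0 := by
  rw [omegaDeriv_eq hN]
  rcases h.lt_or_eq with h | rfl
  · simp [nuDeriv_zero_node h]
  · simp [Chebyshev.node_eq_neg_one hN]

lemma omegaDeriv_succ_self (hN : N ≠ 0) (x : ℝ) :
    omegaDeriv N (N + 1) x = sigmaN (N + 1) := by
  have hcast : (N - 1 : ℤ) = (N - 1 : ℕ) := by omega
  rw [omegaDeriv, chebDeriv_self, hcast, chebDeriv_eq_zero (by omega), sub_zero]

end Perturbations

/-! ### Stationary values -/

/-- The ratio `ν^(k) / ν^(k+1)`; where the denominator vanishes it takes the junk value `0`. -/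
noncomputable def nuRatio (N k : ℕ) (x : ℝ) : ℝ := nuDeriv N k x / nuDeriv N (k + 1) x

/-- For the derivatives `D i` of a function `f`, the value `(f + μ ν)^(k)(x)` for the `μ` which
makes `(f + μ ν)^(k+1)(x)` vanish. -/
noncomputable def stationaryValue (N k : ℕ) (D : ℕ → ℝ → ℝ) (x : ℝ) : ℝ :=
  D k x - nuRatio N k x * D (k + 1) x

/-- The stationary value of `ω` for the derivative of order `j + 1`, multiplied by `N / 2`; see
`mul_stationaryValue_omegaDeriv`. -/
noncomputable def omegaCorrection (N j : ℕ) (x : ℝ) : ℝ :=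
  (j + 1) * nuDeriv N j x - (j + 2) * (nuDeriv N (j + 1) x * nuRatio N (j + 1) x)

section StationaryValues

variable {N j k : ℕ} {x ε ζ : ℝ}

lemma nuRatio_mul (hν : nuDeriv N (k + 1) x ≠ 0) :
    nuRatio N k x * nuDeriv N (k + 1) x = nuDeriv N k x :=
  div_mul_cancel₀ _ hν

lemma mul_stationaryValue_omegaDeriv (hν : nuDeriv N (j + 2) x ≠ 0) :
    N * stationaryValue N (j + 1) (omegaDeriv N) x = 2 * omegaCorrection N j x := by
  have h1 := mul_omegaDeriv N (j + 1) x
  have h2 := mul_omegaDeriv N (j + 2) x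
  have hc := nuRatio_mul hν
  push_cast [Nat.add_sub_cancel_right, show j + 2 - 1 = j + 1 by omega] at h1 h2
  rw [stationaryValue, omegaCorrection]
  linear_combination h1 - nuRatio N (j + 1) x * h2 - 2 * (1 + x) * hc

lemma stationaryValue_chebDeriv_mul_nonneg (hx1 : -1 < x) (hx2 : x ≤ 1)
    (hν : nuDeriv N (k + 1) x ≠ 0) (h : 0 ≤ chebDeriv N k x * chebDeriv N (k + 1) x) :
    0 ≤ stationaryValue N k (chebDeriv N) x * nuDeriv N (k + 1) x := by
  have hpos : 0 < 1 + x := by linarith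
  refine (mul_nonneg_iff_of_pos_left hpos).1 ?_
  have hmul : (1 + x) * (stationaryValue N k (chebDeriv N) x * nuDeriv N (k + 1) x) =
      (1 - x ^ 2) * (chebDeriv N (k + 1) x ^ 2 - chebDeriv N k x * chebDeriv N (k + 2) x) +
        (1 + x) * (chebDeriv N k x * chebDeriv N (k + 1) x) := by
    have hc := nuRatio_mul hν
    rw [nuDeriv_eq k] at hc
    rw [stationaryValue]
    linear_combination -(1 + x) * chebDeriv N (k + 1) x * hc +
      chebDeriv N k x * (one_add_mul_nuDeriv_succ (N := N) k x + chebDeriv_ode N k x)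
  rw [hmul]
  exact add_nonneg (mul_nonneg (by nlinarith)
    (sub_nonneg.2 (chebDeriv_mul_le_sq N k x))) (mul_nonneg hpos.le h)

lemma omegaCorrection_mul_nonpos (hν : nuDeriv N (j + 2) x ≠ 0) :
    omegaCorrection N j x * nuDeriv N (j + 2) x ≤ 0 := by
  have hmul : omegaCorrection N j x * nuDeriv N (j + 2) x =
      (j + 1) * (nuDeriv N j x * nuDeriv N (j + 2) x - nuDeriv N (j + 1) x ^ 2) -
        nuDeriv N (j + 1) x ^ 2 := by
    rw [omegaCorrection]
    linear_combination -(j + 2) * nuDeriv N (j + 1) x * nuRatio_mul hν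
  have hlag := mul_nonneg (by positivity : (0 : ℝ) ≤ j + 1)
    (sub_nonneg.2 (nuDeriv_mul_le_sq (N := N) j x))
  linarith [sq_nonneg (nuDeriv N (j + 1) x)]

lemma chebDeriv_succ_one_eq_endpointGamma (hk : k ≤ N) (hN : N ≠ 0) :
    chebDeriv (N + 1 : ℕ) k 1 = chebDeriv N k 1 * (1 + 2 / N * endpointGamma N k) := by
  have hN0 : (N : ℝ) ≠ 0 := Nat.cast_ne_zero.2 hN
  have hk' : (k : ℝ) ≤ N := Nat.cast_le.2 hk
  have hNk : (N : ℝ) + 1 - k ≠ 0 := by linarith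
  refine mul_right_cancel₀ (mul_ne_zero hN0 hNk) ?_
  rw [chebDeriv_succ_one hk, endpointGamma]
  field_simp
  ring

lemma nuDeriv_succ_pos (hk : k + 1 ≤ N) (hx1 : -1 < x) (hx2 : x < 1) (hε : ε ≠ 0)
    (hu : 0 ≤ ε * chebDeriv N k x) (hw : 0 ≤ ε * chebDeriv N (k + 1) x) :
    0 < ε * nuDeriv N (k + 1) x := by
  have hkN : (k : ℝ) + 1 ≤ N := by exact_mod_cast hk
  have hM : 0 < (N : ℝ) ^ 2 - (k : ℝ) ^ 2 := by nlinarith [k.cast_nonneg (α := ℝ)]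
  have hq : 0 < 1 + k * (1 - x) := by nlinarith [k.cast_nonneg (α := ℝ)]
  refine pos_of_mul_pos_right (a := 1 + x) ?_ (by linarith)
  have hν : (1 + x) * (ε * nuDeriv N (k + 1) x) =
      ((N : ℝ) ^ 2 - (k : ℝ) ^ 2) * (ε * chebDeriv N k x) +
        (1 + k * (1 - x)) * (ε * chebDeriv N (k + 1) x) := by
    linear_combination ε * one_add_mul_nuDeriv_succ (N := N) k x
  rw [hν]
  rcases hu.lt_or_eq with hu' | hu'
  · exact add_pos_of_pos_of_nonneg (mul_pos hM hu') (mul_nonneg hq.le hw)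
  · have hu0 : chebDeriv N k x = 0 := (mul_eq_zero.1 hu'.symm).resolve_left hε
    have hw0 := chebDeriv_succ_ne_zero (by omega) (by nlinarith) hu0
    exact add_pos_of_nonneg_of_pos (mul_nonneg hM.le hu)
      (mul_pos hq (hw.lt_of_ne' (mul_ne_zero hε hw0)))

lemma nuRatio_mul_eq (hν : nuDeriv N (k + 1) x ≠ 0) (ε : ℝ) :
    nuRatio N k x * (((N : ℝ) ^ 2 - (k : ℝ) ^ 2) * (ε * chebDeriv N k x) +
        (1 + k * (1 - x)) * (ε * chebDeriv N (k + 1) x)) =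
      (2 - (1 - x)) * (k * (ε * chebDeriv N k x) - (1 - x) * (ε * chebDeriv N (k + 1) x)) := by
  have hc := nuRatio_mul hν
  rw [nuDeriv_eq k] at hc
  linear_combination ε * (1 + x) * hc - ε * nuRatio N k x * one_add_mul_nuDeriv_succ (N := N) k x

lemma neg_mul_omegaCorrection (ε : ℝ) :
    -(ε * omegaCorrection N j x) =
      ((j + 1 : ℕ) + 1) * (((j + 1 : ℕ) * (ε * chebDeriv N (j + 1) x) -
        (1 - x) * (ε * chebDeriv N (j + 2) x)) * nuRatio N (j + 1) x) -
      (j + 1 : ℕ) * (((j + 1 : ℕ) - 1) * (ε * chebDeriv N j x) -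
        (1 - x) * (ε * chebDeriv N (j + 1) x)) := by
  rw [omegaCorrection, nuDeriv_eq, nuDeriv_eq]
  push_cast
  ring

section Bounds

variable (hN : j + 2 ≤ N) (hx1 : -1 < x) (hx2 : x < 1) (hε : ε ≠ 0)
  (hu : 0 ≤ ε * chebDeriv N (j + 1) x) (hw : 0 ≤ ε * chebDeriv N (j + 2) x)
  (hy : -chebDeriv N (j + 1) 1 ≤ ((N : ℝ) ^ 2 - (j : ℝ) ^ 2) * (ε * chebDeriv N j x))
include hN hx1 hx2 hε hu hw hy

lemma neg_nuRatio_mul_mul_le (hc : nuRatio N (j + 1) x ≤ 0) :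
    -(nuRatio N (j + 1) x * (ε * chebDeriv N (j + 2) x)) * (1 + (j + 1 : ℕ) * (1 - x)) ≤
      chebDeriv N (j + 1) 1 -
        ε * chebDeriv N (j + 1) x * (1 + ((j + 1 : ℕ) - 1) * (1 - x)) := by
  have hν := right_ne_zero_of_mul (nuDeriv_succ_pos (k := j + 1) hN hx1 hx2 hε hu hw).ne'
  have hj : (1 : ℝ) ≤ (j + 1 : ℕ) := by simp
  have hjN : ((j + 1 : ℕ) : ℝ) + 1 ≤ N := by exact_mod_cast hN
  refine neg_mul_mul_le_of_nonpos hj hjN hu hc (nuRatio_mul_eq hν ε)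
    (y := ε * chebDeriv N j x) ?_ ?_
  · simpa using hy
  · push_cast
    linear_combination ε * chebDeriv_ode N j x

lemma mul_stationaryValue_chebDeriv_le (huU : ε * chebDeriv N (j + 1) x ≤ chebDeriv N (j + 1) 1) :
    ε * stationaryValue N (j + 1) (chebDeriv N) x ≤ chebDeriv N (j + 1) 1 := by
  have hval : ε * stationaryValue N (j + 1) (chebDeriv N) x = ε * chebDeriv N (j + 1) x -
      nuRatio N (j + 1) x * (ε * chebDeriv N (j + 2) x) := by
    rw [stationaryValue]
    ring
  rw [hval]
  rcases le_total 0 (nuRatio N (j + 1) x) with hc | hc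
  · linarith [mul_nonneg hc hw]
  · exact sub_mul_le_of_neg_mul_mul_le (by simp) (by linarith) huU
      (neg_nuRatio_mul_mul_le hN hx1 hx2 hε hu hw hy hc) (hu.trans huU)

lemma neg_mul_omegaCorrection_le_of_nonneg
    (huU : 2 * (ε * chebDeriv N (j + 1) x) ≤ chebDeriv N (j + 1) 1)
    (hc : 0 ≤ nuRatio N (j + 1) x) :
    -(ε * omegaCorrection N j x) ≤ endpointGamma N (j + 1 : ℕ) * chebDeriv N (j + 1) 1 := by
  have hν := right_ne_zero_of_mul (nuDeriv_succ_pos (k := j + 1) hN hx1 hx2 hε hu hw).ne'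
  have hjN : ((j + 1 : ℕ) : ℝ) + 1 ≤ N := by exact_mod_cast hN
  rw [neg_mul_omegaCorrection]
  exact correction_le_of_nonneg (by simp) hjN (by linarith) (by linarith) hu hw
    (nuRatio_mul_eq hν ε) hc huU (by simpa using hy)

lemma neg_mul_omegaCorrection_le_of_nonpos
    (huU : ε * chebDeriv N (j + 1) x ≤ chebDeriv N (j + 1) 1)
    (hc : nuRatio N (j + 1) x ≤ 0) (hxj : 0 ≤ x ∨ 1 ≤ j) :
    -(ε * omegaCorrection N j x) ≤ endpointGamma N (j + 1 : ℕ) * chebDeriv N (j + 1) 1 := by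
  have hjN : ((j + 1 : ℕ) : ℝ) + 1 ≤ N := by exact_mod_cast hN
  rw [neg_mul_omegaCorrection]
  refine correction_le_of_nonpos (by simp) (by linarith) huU
    (neg_nuRatio_mul_mul_le hN hx1 hx2 hε hu hw hy hc) hjN (by linarith) hu hc
    (hxj.imp (fun h => by linarith) fun h => ?_) (by simpa using hy)
  exact_mod_cast Nat.succ_le_succ h

end Bounds

lemma IsLargestZero.nuDeriv_succ_pos (h : IsLargestZero N k ζ) (hx : ζ ≤ x) (hx1 : x ≤ 1) :
    0 < nuDeriv N (k + 1) x := by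
  rcases hx1.lt_or_eq with hx1 | rfl
  · simpa using _root_.nuDeriv_succ_pos (ε := 1) h.index_lt (by linarith [h.nonneg]) hx1 one_ne_zero
      (by simpa using h.chebDeriv_nonneg hx le_rfl)
      (by simpa using h.chebDeriv_nonneg hx k.le_succ)
  · rw [nuDeriv_one]
    exact mul_pos (by positivity) (chebDeriv_one_pos h.index_lt)

lemma hasDerivAt_omegaCorrection (hν : nuDeriv N (j + 2) x ≠ 0) :
    HasDerivAt (omegaCorrection N j)
      (nuDeriv N (j + 1) x * ((j + 2) *
        (nuDeriv N (j + 1) x * nuDeriv N (j + 3) x / nuDeriv N (j + 2) x ^ 2) - (j + 3))) x := by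
  have h1 := hasDerivAt_nuDeriv (N := N) (j + 1) x
  have hratio := h1.div (hasDerivAt_nuDeriv (N := N) (j + 2) x) hν
  have := ((hasDerivAt_nuDeriv (N := N) j x).const_mul ((j : ℝ) + 1)).sub
    ((h1.mul hratio).const_mul ((j : ℝ) + 2))
  refine HasDerivAt.congr_deriv (f := omegaCorrection N j) this ?_
  simp only [Nat.add_assoc, Nat.reduceAdd, Pi.div_apply]
  field_simp
  ring

lemma neg_endpointGamma_mul_le_omegaCorrection_one (hN : j + 2 ≤ N) :
    -(endpointGamma N (j + 1 : ℕ) * chebDeriv N (j + 1) 1) ≤ omegaCorrection N j 1 := by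
  have hjN : ((j + 1 : ℕ) : ℝ) + 1 ≤ N := by exact_mod_cast hN
  have hγ := neg_endpointGamma_le (K := (j + 1 : ℕ)) (by simp) hjN
  have hU : 0 < chebDeriv N (j + 1) 1 := chebDeriv_one_pos (by omega)
  push_cast [add_sub_cancel_right] at hγ hjN ⊢
  have hL : 0 < (N : ℝ) ^ 2 - (j : ℝ) ^ 2 := by nlinarith [j.cast_nonneg (α := ℝ)]
  have hM : 0 < (N : ℝ) ^ 2 - ((j : ℝ) + 1) ^ 2 := by nlinarith [j.cast_nonneg (α := ℝ)]
  have hy : chebDeriv N j 1 =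
      (2 * j + 1) * chebDeriv N (j + 1) 1 / ((N : ℝ) ^ 2 - (j : ℝ) ^ 2) := by
    rw [chebDeriv_one_recurrence, mul_div_cancel_left₀ _ hL.ne']
  have hw : chebDeriv N (j + 2) 1 =
      ((N : ℝ) ^ 2 - ((j : ℝ) + 1) ^ 2) * chebDeriv N (j + 1) 1 / (2 * ((j : ℝ) + 1) + 1) := by
    rw [eq_div_iff (by positivity), mul_comm]
    exact_mod_cast chebDeriv_one_recurrence N (j + 1)
  rw [← neg_mul]
  refine (mul_le_mul_of_nonneg_right hγ hU.le).trans_eq ?_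
  rw [omegaCorrection, nuRatio, nuDeriv_one, nuDeriv_one, nuDeriv_one, hy, hw]
  push_cast
  field_simp
  ring

lemma IsLargestZero.neg_endpointGamma_mul_le_omegaCorrection (h : IsLargestZero N (j + 1) ζ)
    (hx : ζ ≤ x) (hx1 : x ≤ 1) (hc : 0 ≤ nuRatio N (j + 1) x) :
    -(endpointGamma N (j + 1 : ℕ) * chebDeriv N (j + 1) 1) ≤ omegaCorrection N j x := by
  have hν : ∀ t ∈ Icc x 1, 0 < nuDeriv N (j + 2) t := fun t ht =>
    h.nuDeriv_succ_pos (hx.trans ht.1) ht.2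
  have hν0 : 0 ≤ nuDeriv N (j + 1) x := by
    rw [← nuRatio_mul (hν x (left_mem_Icc.2 hx1)).ne']
    exact mul_nonneg hc (hν x (left_mem_Icc.2 hx1)).le
  have hmono : ∀ t ∈ Icc x 1, 0 ≤ nuDeriv N (j + 1) t := fun t ht =>
    hν0.trans (le_of_hasDerivWithinAt_nonneg ht.1
      (fun s _ => (hasDerivAt_nuDeriv (j + 1) s).hasDerivWithinAt)
      fun s hs => (hν s ⟨hs.1, hs.2.trans ht.2⟩).le)
  have hanti := le_of_hasDerivWithinAt_nonneg (g := fun t => -omegaCorrection N j t) hx1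
    (fun t ht => (hasDerivAt_omegaCorrection (hν t ht).ne').neg.hasDerivWithinAt) fun t ht => by
      have hlag : nuDeriv N (j + 1) t * nuDeriv N (j + 3) t / nuDeriv N (j + 2) t ^ 2 ≤ 1 :=
        (div_le_one (pow_pos (hν t ht) 2)).2 (nuDeriv_mul_le_sq (j + 1) t)
      rw [← mul_neg]
      refine mul_nonneg (hmono t ht) ?_
      nlinarith [j.cast_nonneg (α := ℝ)]
  linarith [neg_endpointGamma_mul_le_omegaCorrection_one (N := N) (j := j) h.index_lt]

lemma IsLargestZero.three_le (h : IsLargestZero N 1 ζ) (hζ : 0 < ζ) : 3 ≤ N := by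
  by_contra hlt
  obtain rfl : N = 2 := by have := h.index_lt; omega
  have h0 := h.chebDeriv_eq_zero
  rw [chebDeriv_pred_self 1] at h0
  exact (mul_pos hζ (sigmaN_pos 2)).ne' h0

section CentralZone

variable (h : IsLargestZero N (j + 1) ζ) (hx : |x| ≤ ζ) (hε : |ε| = 1)
  (hu : 0 ≤ ε * chebDeriv N (j + 1) x) (hw : 0 ≤ ε * chebDeriv N (j + 2) x)

namespace IsLargestZero

include h hx hε

lemma neg_le_mul_chebDeriv_of_abs_le :
    -chebDeriv N (j + 1) 1 ≤ ((N : ℝ) ^ 2 - (j : ℝ) ^ 2) * (ε * chebDeriv N j x) := by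
  have hjN : (j : ℝ) + 1 < N := by exact_mod_cast h.index_lt
  have hpos : 0 < (N : ℝ) ^ 2 - (j : ℝ) ^ 2 := by nlinarith [j.cast_nonneg (α := ℝ)]
  refine (abs_le.1 ?_).1
  rw [abs_mul, abs_mul, hε, one_mul, abs_of_pos hpos]
  exact h.mul_abs_chebDeriv_pred_le hx

lemma three_mul_mul_chebDeriv_le_of_abs_le :
    3 * (ε * chebDeriv N (j + 1) x) ≤ chebDeriv N (j + 1) 1 := by
  have hbound := h.mul_abs_chebDeriv_le hx
  have hle := (le_abs_self (ε * chebDeriv N (j + 1) x)).trans_eq (by rw [abs_mul, hε, one_mul])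
  have hmul : 0 ≤ 2 * (j : ℝ) * |chebDeriv N (j + 1) x| := by positivity
  push_cast at hbound
  linarith

include hu hw

lemma mul_stationaryValue_le_of_abs_le :
    ε * stationaryValue N (j + 1) (chebDeriv N) x ≤ chebDeriv N (j + 1) 1 := by
  obtain ⟨hx1, hx2⟩ := abs_lt.1 (hx.trans_lt h.lt_one)
  exact mul_stationaryValue_chebDeriv_le h.index_lt hx1 hx2 (by rintro rfl; simp at hε) hu hw
    (h.neg_le_mul_chebDeriv_of_abs_le hx hε)
    (by linarith [h.three_mul_mul_chebDeriv_le_of_abs_le hx hε])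

lemma mul_stationaryValue_sub_omegaCorrection_le_of_abs_le :
    ε * stationaryValue N (j + 1) (chebDeriv N) x - 2 / N * (ε * omegaCorrection N j x) ≤
      chebDeriv N (j + 1) 1 * (1 + 2 / N * endpointGamma N (j + 1 : ℕ)) := by
  obtain ⟨hx1, hx2⟩ := abs_lt.1 (hx.trans_lt h.lt_one)
  have hε0 : ε ≠ 0 := by rintro rfl; simp at hε
  have hy := h.neg_le_mul_chebDeriv_of_abs_le hx hε
  have huU := h.three_mul_mul_chebDeriv_le_of_abs_le hx hε
  have hB := h.mul_stationaryValue_le_of_abs_le hx hε hu hw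
  have of_correction_le (hS : -(ε * omegaCorrection N j x) ≤
      endpointGamma N (j + 1 : ℕ) * chebDeriv N (j + 1) 1) :
      ε * stationaryValue N (j + 1) (chebDeriv N) x - 2 / N * (ε * omegaCorrection N j x) ≤
        chebDeriv N (j + 1) 1 * (1 + 2 / N * endpointGamma N (j + 1 : ℕ)) := by
    linarith [mul_le_mul_of_nonneg_left hS (by positivity : (0 : ℝ) ≤ 2 / N)]
  rcases le_or_gt 0 (nuRatio N (j + 1) x) with hc | hc
  · exact of_correction_le (neg_mul_omegaCorrection_le_of_nonneg h.index_lt hx1 hx2 hε0 hu hw hy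
      (by linarith) hc)
  by_cases hxj : 0 ≤ x ∨ 1 ≤ j
  · exact of_correction_le (neg_mul_omegaCorrection_le_of_nonpos h.index_lt hx1 hx2 hε0 hu hw hy
      (by linarith) hc.le hxj)
  push Not at hxj
  obtain ⟨hx0, hj⟩ := hxj
  obtain rfl : j = 0 := by omega
  have hN3 : (3 : ℝ) ≤ N := by exact_mod_cast h.three_le ((abs_pos.2 hx0.ne).trans_le hx)
  have he := neg_nuRatio_mul_mul_le h.index_lt hx1 hx2 hε0 hu hw hy hc.le
  have hle := sub_mul_add_correction_le hN3 (q := 1 - x) (by linarith) (by linarith) hu huU hc.le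
    (w := ε * chebDeriv N 2 x) (by simpa using he)
  rw [sub_eq_add_neg, ← mul_neg, neg_mul_omegaCorrection, stationaryValue]
  push_cast at hle ⊢
  linarith

end IsLargestZero

end CentralZone

section OuterZone

variable (h : IsLargestZero N (j + 1) ζ) (hx : ζ ≤ x) (hx1 : x < 1)

namespace IsLargestZero

include h hx

lemma neg_le_mul_chebDeriv_of_le :
    -chebDeriv N (j + 1) 1 ≤ ((N : ℝ) ^ 2 - (j : ℝ) ^ 2) * chebDeriv N j x := by
  have hjN : (j : ℝ) + 1 < N := by exact_mod_cast h.index_lt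
  have hpos : 0 < (N : ℝ) ^ 2 - (j : ℝ) ^ 2 := by nlinarith [j.cast_nonneg (α := ℝ)]
  have hζ := h.neg_le_mul_chebDeriv_of_abs_le (abs_of_nonneg h.nonneg).le (abs_one (α := ℝ))
  rw [one_mul] at hζ
  exact hζ.trans (mul_le_mul_of_nonneg_left (h.chebDeriv_le le_rfl le_rfl hx) hpos.le)

include hx1

lemma stationaryValue_le_of_le :
    stationaryValue N (j + 1) (chebDeriv N) x ≤ chebDeriv N (j + 1) 1 := by
  simpa using mul_stationaryValue_chebDeriv_le (ε := 1) h.index_lt (by linarith [h.nonneg]) hx1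
    one_ne_zero (by simpa using h.chebDeriv_nonneg hx le_rfl)
    (by simpa using h.chebDeriv_nonneg hx (by omega))
    (by simpa using h.neg_le_mul_chebDeriv_of_le hx)
    (by simpa using h.chebDeriv_le (by omega) hx hx1.le)

lemma neg_omegaCorrection_le_of_le :
    -omegaCorrection N j x ≤ endpointGamma N (j + 1 : ℕ) * chebDeriv N (j + 1) 1 := by
  rcases le_total 0 (nuRatio N (j + 1) x) with hc | hc
  · exact neg_le.1 (h.neg_endpointGamma_mul_le_omegaCorrection hx hx1.le hc)
  · simpa using neg_mul_omegaCorrection_le_of_nonpos (ε := 1) h.index_lt (by linarith [h.nonneg])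
      hx1 one_ne_zero (by simpa using h.chebDeriv_nonneg hx le_rfl)
      (by simpa using h.chebDeriv_nonneg hx (by omega))
      (by simpa using h.neg_le_mul_chebDeriv_of_le hx)
      (by simpa using h.chebDeriv_le (by omega) hx hx1.le) hc (Or.inl (h.nonneg.trans hx))

end IsLargestZero

end OuterZone

lemma exists_sign_mul_nonneg {u w : ℝ} (h : 0 ≤ u * w) :
    ∃ ε : ℝ, |ε| = 1 ∧ 0 ≤ ε * u ∧ 0 ≤ ε * w := by
  rcases mul_nonneg_iff.1 h with ⟨hu, hw⟩ | ⟨hu, hw⟩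
  · exact ⟨1, by simp, by simpa, by simpa⟩
  · exact ⟨-1, by simp, by simpa, by simpa⟩

lemma nuDeriv_succ_ne_zero (hk : k + 1 ≤ N) (hx1 : -1 < x) (hx2 : x < 1)
    (h : 0 ≤ chebDeriv N k x * chebDeriv N (k + 1) x) : nuDeriv N (k + 1) x ≠ 0 := by
  obtain ⟨ε, hε, hu, hw⟩ := exists_sign_mul_nonneg h
  exact right_ne_zero_of_mul (nuDeriv_succ_pos hk hx1 hx2 (by rintro rfl; simp at hε) hu hw).ne'

lemma IsLargestZero.exists_sign_stationaryValue_le (h : IsLargestZero N (j + 1) ζ) (hx : -ζ ≤ x)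
    (hx1 : x < 1) (huw : 0 ≤ chebDeriv N (j + 1) x * chebDeriv N (j + 2) x) :
    ∃ ε : ℝ, |ε| = 1 ∧ 0 < ε * nuDeriv N (j + 2) x ∧
      ε * stationaryValue N (j + 1) (chebDeriv N) x ≤ chebDeriv N (j + 1) 1 ∧
      ε * stationaryValue N (j + 1) (chebDeriv N) x - 2 / N * (ε * omegaCorrection N j x) ≤
        chebDeriv (N + 1 : ℕ) (j + 1) 1 := by
  have hjN := h.index_lt
  have hx0 : -1 < x := by linarith [h.lt_one]
  rw [chebDeriv_succ_one_eq_endpointGamma hjN.le (by omega)]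
  rcases le_total x ζ with hxζ | hxζ
  · obtain ⟨ε, hε, hu, hw⟩ := exists_sign_mul_nonneg huw
    have hxζ' := abs_le.2 ⟨hx, hxζ⟩
    exact ⟨ε, hε, _root_.nuDeriv_succ_pos hjN hx0 hx1 (by rintro rfl; simp at hε) hu hw,
      h.mul_stationaryValue_le_of_abs_le hxζ' hε hu hw,
      h.mul_stationaryValue_sub_omegaCorrection_le_of_abs_le hxζ' hε hu hw⟩
  · refine ⟨1, abs_one, by simpa using h.nuDeriv_succ_pos hxζ hx1.le,
      by simpa using h.stationaryValue_le_of_le hxζ hx1, ?_⟩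
    have hB := h.stationaryValue_le_of_le hxζ hx1
    have hS := mul_le_mul_of_nonneg_left (h.neg_omegaCorrection_le_of_le hxζ hx1)
      (by positivity : (0 : ℝ) ≤ 2 / N)
    linarith

/-- Both sides are affine in `s`, so only the end values `s = 0` and `s = 1` matter. -/
lemma IsLargestZero.abs_stationaryValue_sub_le (h : IsLargestZero N (j + 1) ζ) (hx : -ζ ≤ x)
    (hx1 : x < 1) (huw : 0 ≤ chebDeriv N (j + 1) x * chebDeriv N (j + 2) x) {s : ℝ}
    (hs : s ∈ Icc (0 : ℝ) 1) :
    |stationaryValue N (j + 1) (chebDeriv N) x -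
        s * stationaryValue N (j + 1) (omegaDeriv N) x| ≤
      (1 - s) * chebDeriv N (j + 1) 1 + s * chebDeriv (N + 1 : ℕ) (j + 1) 1 := by
  obtain ⟨ε, hε, hν, hB, hBS⟩ := h.exists_sign_stationaryValue_le hx hx1 huw
  have hν0 := right_ne_zero_of_mul hν.ne'
  have hN0 : (N : ℝ) ≠ 0 := by have := h.index_lt; exact_mod_cast (by omega : N ≠ 0)
  have hω : stationaryValue N (j + 1) (omegaDeriv N) x = 2 / N * omegaCorrection N j x := by
    rw [div_mul_eq_mul_div, eq_div_iff hN0, mul_comm, mul_stationaryValue_omegaDeriv hν0]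
  have hε2 : ε ^ 2 = 1 := by rw [← sq_abs, hε, one_pow]
  have hB0 : 0 ≤ ε * stationaryValue N (j + 1) (chebDeriv N) x := by
    refine nonneg_of_mul_nonneg_left ?_ hν
    have := stationaryValue_chebDeriv_mul_nonneg (by linarith [h.lt_one]) hx1.le hν0 huw
    linear_combination this -
      (stationaryValue N (j + 1) (chebDeriv N) x * nuDeriv N (j + 2) x) * hε2
  have hS0 : ε * omegaCorrection N j x ≤ 0 := by
    refine nonpos_of_mul_nonpos_left ?_ hν
    have := omegaCorrection_mul_nonpos hν0
    linear_combination this + (omegaCorrection N j x * nuDeriv N (j + 2) x) * hε2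
  have hsS := mul_nonneg (mul_nonneg hs.1 (by positivity : (0 : ℝ) ≤ 2 / N)) (neg_nonneg.2 hS0)
  have hB' := mul_le_mul_of_nonneg_left hB (sub_nonneg.2 hs.2)
  have hBS' := mul_le_mul_of_nonneg_left hBS hs.1
  have habs (v : ℝ) : |ε * v| = |v| := by rw [abs_mul, hε, one_mul]
  rw [← habs, hω, abs_of_nonneg] <;> linarith

end StationaryValues

/-! ### Comparison with explicit polynomials -/

/-- `F 0, …, F n` are the successive derivatives of a function in `W^n_∞(σ)`. -/
structure IsSobolevTower (n : ℕ) (σ : ℝ) (F : ℕ → ℝ → ℝ) : Prop where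
  isDerivTower : IsDerivTower (Icc (-1) 1) n F
  abs_zero_le_one : ∀ x ∈ Icc (-1 : ℝ) 1, |F 0 x| ≤ 1
  abs_top_le : ∀ x ∈ Icc (-1 : ℝ) 1, |F n x| ≤ σ

/-- The derivatives of `t ↦ F 0 (-t)`, when `F` lists those of `F 0`. -/
def reflectTower (F : ℕ → ℝ → ℝ) (i : ℕ) (t : ℝ) : ℝ := (-1) ^ i * F i (-t)

lemma abs_reflectTower (F : ℕ → ℝ → ℝ) (i : ℕ) (t : ℝ) : |reflectTower F i t| = |F i (-t)| := by
  rw [reflectTower, abs_mul, abs_pow, abs_neg, abs_one, one_pow, one_mul]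

lemma IsDerivTower.reflectTower {n : ℕ} {F : ℕ → ℝ → ℝ} (hF : IsDerivTower (Icc (-1) 1) n F) :
    IsDerivTower (Icc (-1) 1) n (reflectTower F) := by
  intro i hi x hx
  have hmaps : MapsTo (fun t : ℝ => -t) (Icc (-1) 1) (Icc (-1) 1) :=
    fun t ht => neg_mem_Icc_iff.2 (by simpa using ht)
  have hcomp := (hF i hi (-x) (hmaps hx)).comp x (hasDerivAt_neg x).hasDerivWithinAt hmaps
  refine (hcomp.const_mul ((-1) ^ i)).congr_deriv ?_
  simp only [_root_.reflectTower, pow_succ]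
  ring

lemma exists_abs_lt_one_mul_eq {a b : ℝ} (h : |b| < |a|) : ∃ l, |l| < 1 ∧ l * a = b := by
  have ha : 0 < |a| := (abs_nonneg b).trans_lt h
  exact ⟨b / a, by rwa [abs_div, div_lt_one ha], div_mul_cancel₀ b (abs_pos.1 ha)⟩

lemma abs_mul_le_of_abs_lt_one {l a σ : ℝ} (hl : |l| < 1) (ha : |a| ≤ σ) : |l * a| ≤ σ := by
  rw [abs_mul]
  exact (mul_le_of_le_one_left (abs_nonneg a) hl.le).trans ha

lemma alternates_mul_sub_of_node {N r : ℕ} (hr : r ≤ N + 1) {f g : ℝ → ℝ} {l : ℝ}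
    (hf : ∀ x ∈ Icc (-1 : ℝ) 1, |f x| ≤ 1) (hg : ∀ i < r, g (Chebyshev.node N i) = (-1) ^ i)
    (hl : |l| < 1) : Alternates (fun x => l * f x - g x) (Icc (-1) 1) r (-1) := by
  refine Alternates.of_seq (z := Chebyshev.node N)
    (fun i hi => Chebyshev.node_lt (by omega) (by omega)) (fun i _ => Chebyshev.node_mem_Icc) ?_
  intro i hi
  set y := Chebyshev.node N i
  have hlt : (-1) ^ i * (l * f y) < 1 := by
    refine (le_abs_self _).trans_lt ?_
    rw [abs_mul, abs_pow, abs_neg, abs_one, one_pow, one_mul, abs_mul]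
    exact (mul_le_of_le_one_right (abs_nonneg l) (hf y Chebyshev.node_mem_Icc)).trans_lt hl
  have hsq : (-1 : ℝ) ^ i * (-1) ^ i = 1 := by rw [← mul_pow]; norm_num
  rw [hg i hi]
  linear_combination hlt - hsq

namespace IsSobolevTower

variable {N n j k : ℕ} {σ s x ζ : ℝ} {F Q : ℕ → ℝ → ℝ}

lemma reflectTower (hF : IsSobolevTower n σ F) : IsSobolevTower n σ (reflectTower F) where
  isDerivTower := hF.isDerivTower.reflectTower
  abs_zero_le_one x hx := by
    rw [abs_reflectTower]
    exact hF.abs_zero_le_one _ (neg_mem_Icc_iff.2 (by simpa using hx))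
  abs_top_le x hx := by
    rw [abs_reflectTower]
    exact hF.abs_top_le _ (neg_mem_Icc_iff.2 (by simpa using hx))

/-- If `|Q k x| < |F k x|`, some `l * F k` with `|l| < 1` is tangent to `Q k` at `x`. Since
`l * F - Q` alternates at the Chebyshev nodes, `l * F (N + 1) < Q (N + 1)` somewhere, which the
bound on `F (N + 1)` excludes. -/
lemma abs_le_of_stationary (hF : IsSobolevTower (N + 1) σ F) (hk : k + 1 ≤ N)
    (hQ : IsDerivTower (Icc (-1) 1) (N + 1) Q)
    (hQ0 : ∀ i < N, Q 0 (Chebyshev.node N i) = (-1) ^ i)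
    (hQtop : ∀ t ∈ Icc (-1 : ℝ) 1, Q (N + 1) t ≤ -σ) (hx : x ∈ Icc (-1 : ℝ) 1)
    (hFx : F (k + 1) x = 0) (hQx : Q (k + 1) x = 0) : |F k x| ≤ |Q k x| := by
  by_contra! hlt
  obtain ⟨l, hl, hlF⟩ := exists_abs_lt_one_mul_eq hlt
  obtain ⟨m, rfl⟩ : ∃ m, N = m + 1 + k := ⟨N - (k + 1), by omega⟩
  have hH := (hF.isDerivTower.const_mul l).sub hQ
  have halt := (hH.of_le (by omega)).alternates (n := k) (m := m + 1)
    (alternates_mul_sub_of_node (by omega) hF.abs_zero_le_one hQ0 hl)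
  rw [Nat.add_right_comm] at hH
  obtain ⟨ξ, hξ, hpos⟩ := hH.shift.exists_pos_of_double_zero hx
    (by simp only [Nat.zero_add, hlF, sub_self])
    (by simp only [Nat.add_comm 1, hFx, hQx, mul_zero, sub_self]) (by simpa only [Nat.zero_add])
  rw [Nat.add_right_comm (m + 1) k] at hF hQtop
  have hlow := (abs_le.1 (abs_mul_le_of_abs_lt_one hl (hF.abs_top_le ξ hξ))).1
  linarith [hQtop ξ hξ]

lemma abs_one_le (hF : IsSobolevTower (N + 1) σ F) (hk : k ≤ N)
    (hQ : IsDerivTower (Icc (-1) 1) (N + 1) Q)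
    (hQ0 : ∀ i ≤ N, Q 0 (Chebyshev.node N i) = (-1) ^ i)
    (hQtop : ∀ t ∈ Icc (-1 : ℝ) 1, σ ≤ Q (N + 1) t) : |F k 1| ≤ |Q k 1| := by
  by_contra! hlt
  obtain ⟨l, hl, hlF⟩ := exists_abs_lt_one_mul_eq hlt
  obtain ⟨m, rfl⟩ : ∃ m, N = m + k := ⟨N - k, by omega⟩
  have hH := (hF.isDerivTower.const_mul l).sub hQ
  have halt := (hH.of_le (by omega)).alternates (n := k) (m := m + 1)
    (alternates_mul_sub_of_node (by omega) hF.abs_zero_le_one (fun i hi => hQ0 i (by omega)) hl)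
  rw [Nat.add_right_comm] at hH
  obtain ⟨ξ, hξ, hneg⟩ := hH.shift.exists_neg_of_right_nonpos (isGreatest_Icc (by norm_num))
    (by simp only [Nat.zero_add, hlF, sub_self, mul_zero, le_refl]) (by simpa only [Nat.zero_add])
  rw [Nat.add_right_comm m k] at hF hQtop
  have hup := (abs_le.1 (abs_mul_le_of_abs_lt_one hl (hF.abs_top_le ξ hξ))).2
  linarith [hQtop ξ hξ]

lemma abs_one_le_chebDeriv_add (hF : IsSobolevTower (N + 1) (s * sigmaN (N + 1)) F) (hN : N ≠ 0)
    (hk : k ≤ N) : |F k 1| ≤ |chebDeriv N k 1 + s * omegaDeriv N k 1| := by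
  refine hF.abs_one_le hk (Q := fun i t => chebDeriv N i t + s * omegaDeriv N i t)
    ((isDerivTower_chebDeriv _ _ N).add ((isDerivTower_omegaDeriv _ _).const_mul s)) ?_ ?_
  · intro i hi
    rw [chebDeriv_zero_node hi, omegaDeriv_zero_node hN hi, mul_zero, add_zero]
  · intro t _
    rw [chebDeriv_eq_zero N.lt_succ_self, omegaDeriv_succ_self hN, zero_add]

lemma abs_le_stationaryValue (hF : IsSobolevTower (N + 1) (s * sigmaN (N + 1)) F)
    (hk : k + 1 ≤ N) (hx : x ∈ Icc (-1 : ℝ) 1) (hFx : F (k + 1) x = 0)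
    (hν : nuDeriv N (k + 1) x ≠ 0) :
    |F k x| ≤ |stationaryValue N k (chebDeriv N) x - s * stationaryValue N k (omegaDeriv N) x| := by
  have hN : N ≠ 0 := by omega
  set μ := (s * omegaDeriv N (k + 1) x - chebDeriv N (k + 1) x) / nuDeriv N (k + 1) x with hμ
  have hμν : μ * nuDeriv N (k + 1) x = s * omegaDeriv N (k + 1) x - chebDeriv N (k + 1) x :=
    div_mul_cancel₀ _ hν
  have hQ := ((isDerivTower_chebDeriv (Icc (-1) 1) (N + 1) N).sub
    ((isDerivTower_omegaDeriv (N := N) _ _).const_mul s)).add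
      ((isDerivTower_nuDeriv (N := N) _ _).const_mul μ)
  refine (hF.abs_le_of_stationary hk hQ ?_ ?_ hx hFx (by rw [hμν]; ring)).trans_eq ?_
  · intro i hi
    rw [chebDeriv_zero_node hi.le, omegaDeriv_zero_node hN hi.le, nuDeriv_zero_node hi]
    ring
  · intro t _
    rw [chebDeriv_eq_zero N.lt_succ_self, omegaDeriv_succ_self hN, nuDeriv_eq,
      chebDeriv_eq_zero (by omega), chebDeriv_eq_zero (by omega)]
    linarith
  · congr 1
    rw [stationaryValue, stationaryValue, nuRatio, hμ]
    ring

end IsSobolevTower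

lemma IsLargestZero.sign_condition_or_neg {N j : ℕ} {ζ : ℝ} (h : IsLargestZero N j ζ) (x : ℝ) :
    (-ζ ≤ x ∧ 0 ≤ chebDeriv N j x * chebDeriv N (j + 1) x) ∨
      (-ζ ≤ -x ∧ 0 ≤ chebDeriv N j (-x) * chebDeriv N (j + 1) (-x)) := by
  have hout {y : ℝ} (hy : ζ ≤ y) : -ζ ≤ y ∧ 0 ≤ chebDeriv N j y * chebDeriv N (j + 1) y :=
    ⟨by linarith [h.nonneg],
      mul_nonneg (h.chebDeriv_nonneg hy le_rfl) (h.chebDeriv_nonneg hy j.le_succ)⟩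
  rcases le_total |x| ζ with hx | hx
  · obtain ⟨hl, hr⟩ := abs_le.1 hx
    rcases le_total 0 (chebDeriv N j x * chebDeriv N (j + 1) x) with hp | hp
    · exact .inl ⟨hl, hp⟩
    · refine .inr ⟨by linarith, ?_⟩
      have hsq : (-1 : ℝ) ^ (N + j) * (-1) ^ (N + j) = 1 := by rw [← mul_pow]; norm_num
      rw [chebDeriv_neg, chebDeriv_neg, ← add_assoc N, pow_succ]
      linear_combination hp + chebDeriv N j x * chebDeriv N (j + 1) x * hsq
  · exact (le_abs'.1 hx).symm.imp hout fun hneg => hout (by linarith)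

namespace IsSobolevTower

variable {N j : ℕ} {s x : ℝ} {F : ℕ → ℝ → ℝ}

lemma abs_le_of_deriv_eq_zero (hF : IsSobolevTower (N + 1) (s * sigmaN (N + 1)) F)
    (hj : j + 2 ≤ N) (hs : s ∈ Icc 0 1) (hx : x ∈ Ioo (-1) 1) (hFx : F (j + 2) x = 0) :
    |F (j + 1) x| ≤ (1 - s) * chebDeriv N (j + 1) 1 + s * chebDeriv (N + 1 : ℕ) (j + 1) 1 := by
  obtain ⟨ζ, hζ⟩ := exists_isLargestZero (N := N) (j := j + 1) (by omega)
  have bound {G : ℕ → ℝ → ℝ} {y : ℝ} (hG : IsSobolevTower (N + 1) (s * sigmaN (N + 1)) G)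
      (hy : y ∈ Ioo (-1) 1) (hGy : G (j + 2) y = 0)
      (hsign : -ζ ≤ y ∧ 0 ≤ chebDeriv N (j + 1) y * chebDeriv N (j + 2) y) :=
    (hG.abs_le_stationaryValue hj (Ioo_subset_Icc_self hy) hGy
      (nuDeriv_succ_ne_zero hj hy.1 hy.2 hsign.2)).trans
      (hζ.abs_stationaryValue_sub_le hsign.1 hy.2 hsign.2 hs)
  rcases hζ.sign_condition_or_neg x with hsign | hsign
  · exact bound hF hx hFx hsign
  · have := bound hF.reflectTower (neg_mem_Ioo_iff.2 (by simpa using hx))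
      (by simp only [_root_.reflectTower, neg_neg, hFx, mul_zero]) hsign
    rwa [abs_reflectTower, neg_neg] at this

end IsSobolevTower

lemma isSobolevTower_convex_comb_chebDeriv {N : ℕ} {s : ℝ} (hs : s ∈ Icc 0 1) :
    IsSobolevTower (N + 1) (s * sigmaN (N + 1))
      fun i x => (1 - s) * chebDeriv N i x + s * chebDeriv (N + 1 : ℕ) i x where
  isDerivTower := ((isDerivTower_chebDeriv _ _ _).const_mul _).add
    ((isDerivTower_chebDeriv _ _ _).const_mul _)
  abs_zero_le_one x hx := by
    have hT (m : ℕ) : |chebDeriv m 0 x| ≤ 1 :=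
      (abs_chebDeriv_le (abs_le.2 hx)).trans_eq (chebDeriv_zero_one m)
    calc
      _ ≤ (1 - s) * |chebDeriv N 0 x| + s * |chebDeriv (N + 1 : ℕ) 0 x| := by
        refine (abs_add_le _ _).trans_eq ?_
        rw [abs_mul, abs_mul, abs_of_nonneg (sub_nonneg.2 hs.2), abs_of_nonneg hs.1]
      _ ≤ (1 - s) * 1 + s * 1 := add_le_add
        (mul_le_mul_of_nonneg_left (hT N) (sub_nonneg.2 hs.2))
        (mul_le_mul_of_nonneg_left (hT (N + 1)) hs.1)
      _ = 1 := by ring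
  abs_top_le x _ := by
    rw [chebDeriv_eq_zero N.lt_succ_self, chebDeriv_self, mul_zero, zero_add,
      abs_of_nonneg (mul_nonneg hs.1 (sigmaN_pos _).le)]

/-! ### Reduction to a maximum in the right half, and extension past it -/

lemma exists_hasDerivAt_tower {g : ℝ → ℝ} (hg : Continuous g) (x : ℝ) (m : ℕ) (a : ℕ → ℝ) :
    ∃ P : ℕ → ℝ → ℝ, P m = g ∧ (∀ i ≤ m, Continuous (P i)) ∧
      (∀ i < m, ∀ t, HasDerivAt (P i) (P (i + 1) t) t) ∧ ∀ i < m, P i x = a i := by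
  induction m generalizing a with
  | zero => exact ⟨fun _ => g, rfl, fun _ _ => hg, by simp, by simp⟩
  | succ m ih =>
    obtain ⟨P, htop, hcont, hderiv, hval⟩ := ih fun i => a (i + 1)
    have hprim (t : ℝ) : HasDerivAt (fun t => a 0 + ∫ u in x..t, P 0 u) (P 0 t) t :=
      ((hcont 0 m.zero_le).integral_hasStrictDerivAt x t).hasDerivAt.const_add _
    refine ⟨fun i => Nat.casesOn i (fun t => a 0 + ∫ u in x..t, P 0 u) P, htop, ?_, ?_, ?_⟩
    · rintro (_ | i) hi
      · exact continuous_iff_continuousAt.2 fun t => (hprim t).continuousAt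
      · exact hcont i (by omega)
    · rintro (_ | i) hi t
      · exact hprim t
      · exact hderiv i (by omega) t
    · rintro (_ | i) hi
      · simp
      · exact hval i (by omega)

lemma exists_isDerivTower_top_linear {N : ℕ} (σ : ℝ) {x b : ℝ} (hxb : x < b) {a : ℕ → ℝ}
    (ha : a (N + 1) = 0) :
    ∃ P : ℕ → ℝ → ℝ, IsDerivTower (Icc x b) (N + 1) P ∧ (∀ i ≤ N + 1, P i x = a i) ∧
      (∀ t, P (N + 1) t = σ * ((t - x) / (b - x))) ∧ a N + σ * (b - x) / 2 ≤ P N b := by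
  obtain ⟨P, htop, -, hderiv, hval⟩ := exists_hasDerivAt_tower
    (g := fun t => σ * ((t - x) / (b - x))) (by fun_prop) x (N + 1) a
  have hP : IsDerivTower (Icc x b) (N + 1) P := fun i hi t _ => (hderiv i hi t).hasDerivWithinAt
  have hPx (i : ℕ) (hi : i ≤ N + 1) : P i x = a i := by
    rcases hi.lt_or_eq with h | rfl
    · exact hval i h
    · simp [htop, ha]
  have hlinear : IsDerivTower (Icc x b) 2 fun i => match i with
      | 0 => P N
      | 1 => P (N + 1)
      | _ => fun _ => σ / (b - x) := by
    rintro (_ | _ | i) hi t ht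
    · exact hP N N.lt_succ_self t ht
    · simp only [htop]
      exact ((((hasDerivWithinAt_id t _).sub_const x).div_const (b - x)).const_mul σ).congr_deriv
        (by ring)
    · omega
  have htaylor := hlinear.taylor_two_le (c := σ / (b - x)) hxb.le fun _ _ => le_rfl
  simp only [hPx N (by omega), hPx (N + 1) le_rfl, ha] at htaylor
  refine ⟨P, hP, hPx, fun t => congrFun htop t, le_trans (le_of_eq ?_) htaylor⟩
  have := sub_ne_zero.2 hxb.ne'
  field_simp
  ring

lemma hasDerivWithinAt_ite_le {f f' p p' : ℝ → ℝ} {a b x : ℝ} (hx : x ∈ Icc a b)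
    (hf : ∀ t ∈ Icc a x, HasDerivWithinAt f (f' t) (Icc a x) t)
    (hp : ∀ t ∈ Icc x b, HasDerivWithinAt p (p' t) (Icc x b) t) (h0 : f x = p x)
    (h1 : f' x = p' x) {t : ℝ} (ht : t ∈ Icc a b) :
    HasDerivWithinAt (fun t => if t ≤ x then f t else p t) (if t ≤ x then f' t else p' t)
      (Icc a b) t := by
  rw [← Icc_union_Icc_eq_Icc hx.1 hx.2]
  refine HasDerivWithinAt.union ?_ ?_
  · by_cases htx : t ≤ x
    · rw [if_pos htx]
      exact (hf t ⟨ht.1, htx⟩).congr (fun y hy => if_pos hy.2) (if_pos htx)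
    · exact HasFDerivWithinAt.of_notMem_closure (by simp [htx])
  · by_cases hxt : x ≤ t
    · have ite_eq {q r : ℝ → ℝ} (h : q x = r x) {y : ℝ} (hy : x ≤ y) :
          (if y ≤ x then q y else r y) = r y := by
        split_ifs with hyx
        · rw [le_antisymm hyx hy, h]
        · rfl
      rw [ite_eq h1 hxt]
      exact (hp t ⟨hxt, ht.2⟩).congr (fun y hy => ite_eq h0 hy.1) (ite_eq h0 hxt)
    · exact HasFDerivWithinAt.of_notMem_closure (by simp [hxt])

/-- `integralBound σ d m u` is the `m`-fold integral over `[0, u]` of `σ * (1 + u / d)`. -/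
noncomputable def integralBound (σ d : ℝ) (m : ℕ) (u : ℝ) : ℝ :=
  σ * (u ^ m / m.factorial + u ^ (m + 1) / (d * (m + 1).factorial))

lemma integralBound_mono {σ d u v : ℝ} (hσ : 0 ≤ σ) (hd : 0 ≤ d) (hu : 0 ≤ u) (huv : u ≤ v)
    (m : ℕ) : integralBound σ d m u ≤ integralBound σ d m v := by
  unfold integralBound
  gcongr

lemma integralBound_self (σ : ℝ) {d : ℝ} (hd : d ≠ 0) (m : ℕ) :
    integralBound σ d m d = σ * d ^ m * (m + 2) / (m + 1).factorial := by
  rw [integralBound, Nat.factorial_succ, pow_succ]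
  push_cast
  field_simp
  ring

lemma hasDerivAt_integralBound (σ : ℝ) {d : ℝ} (hd : d ≠ 0) (m : ℕ) (u : ℝ) :
    HasDerivAt (integralBound σ d (m + 1)) (integralBound σ d m u) u := by
  have hpow (l : ℕ) := hasDerivAt_pow (l + 1) u
  refine ((((hpow m).div_const (m + 1).factorial).add
    ((hpow (m + 1)).div_const (d * (m + 2).factorial))).const_mul σ).congr_deriv ?_
  rw [integralBound, Nat.factorial_succ (m + 1), Nat.factorial_succ m]
  push_cast
  field_simp

lemma IsDerivTower.abs_le_integralBound {n : ℕ} {D : ℕ → ℝ → ℝ} {a b σ d : ℝ} (hd : d ≠ 0)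
    (hD : IsDerivTower (Icc a b) n D) (h0 : ∀ i < n, D i a = 0)
    (htop : ∀ t ∈ Icc a b, |D n t| ≤ integralBound σ d 0 (t - a)) {t : ℝ} (ht : t ∈ Icc a b) :
    |D 0 t| ≤ integralBound σ d n (t - a) := by
  induction n generalizing D t with
  | zero => exact htop t ht
  | succ n ih =>
    have hderiv (y : ℝ) (hy : y ∈ Icc a b) : |D 1 y| ≤ integralBound σ d n (y - a) :=
      ih hD.shift (fun i hi => h0 (i + 1) (by omega)) htop hy
    refine image_norm_le_of_norm_deriv_right_le_deriv_boundary
      (B := fun y => integralBound σ d (n + 1) (y - a))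
      (fun y hy => (hD 0 n.succ_pos y hy).continuousWithinAt)
      (fun y hy => (hD 0 n.succ_pos y (Ico_subset_Icc_self hy)).mono_of_mem_nhdsWithin
        (Icc_mem_nhdsGE_of_mem hy)) ?_
      (fun y => (hasDerivAt_integralBound σ hd n (y - a)).comp_sub_const y a)
      (fun y hy => hderiv y (Ico_subset_Icc_self hy)) ht
    simp [h0 0 n.succ_pos, integralBound]

namespace IsSobolevTower

variable {N n k : ℕ} {σ x : ℝ} {F : ℕ → ℝ → ℝ}

lemma neg (hF : IsSobolevTower n σ F) : IsSobolevTower n σ fun i t => -F i t where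
  isDerivTower i hi x hx := (hF.isDerivTower i hi x hx).neg
  abs_zero_le_one x hx := by simpa only [abs_neg] using hF.abs_zero_le_one x hx
  abs_top_le x hx := by simpa only [abs_neg] using hF.abs_top_le x hx

/-- Reflection and a change of sign move a maximum of `|F k|` into `[0, 1]`. -/
lemma exists_isMaxOn_nonneg (hF : IsSobolevTower n σ F) (hk : k < n) :
    ∃ G, IsSobolevTower n σ G ∧ ∃ y ∈ Icc (0 : ℝ) 1,
      (∀ t ∈ Icc (-1 : ℝ) 1, |G k t| ≤ G k y) ∧ ∀ t ∈ Icc (-1 : ℝ) 1, |F k t| ≤ G k y := by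
  obtain ⟨x, hx, hmax⟩ := isCompact_Icc.exists_isMaxOn (nonempty_Icc.2 (by norm_num : (-1 : ℝ) ≤ 1))
    (ContinuousOn.abs fun t ht => (hF.isDerivTower k hk t ht).continuousWithinAt)
  replace hmax : ∀ t ∈ Icc (-1 : ℝ) 1, |F k t| ≤ |F k x| := hmax
  obtain ⟨G, hG, y, hy, hGmax, hGF⟩ : ∃ G, IsSobolevTower n σ G ∧ ∃ y ∈ Icc (0 : ℝ) 1,
      (∀ t ∈ Icc (-1 : ℝ) 1, |G k t| ≤ |G k y|) ∧ |G k y| = |F k x| := by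
    rcases le_total 0 x with h0 | h0
    · exact ⟨F, hF, x, ⟨h0, hx.2⟩, hmax, rfl⟩
    · refine ⟨_, hF.reflectTower, -x, ⟨by linarith, by linarith [hx.1]⟩, fun t ht => ?_, ?_⟩
      · rw [abs_reflectTower, abs_reflectTower, neg_neg]
        exact hmax _ (neg_mem_Icc_iff.2 (by simpa using ht))
      · rw [abs_reflectTower, neg_neg]
  rw [← hGF] at hmax
  rcases le_total 0 (G k y) with h0 | h0
  · rw [abs_of_nonneg h0] at hGmax hmax
    exact ⟨G, hG, y, hy, hGmax, hmax⟩
  · rw [abs_of_nonpos h0] at hGmax hmax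
    exact ⟨_, hG.neg, y, hy, by simpa only [abs_neg] using hGmax, hmax⟩

lemma of_abs_zero_le (hF : IsDerivTower (Icc (-1) 1) n F) {c : ℝ} (hc : 1 ≤ c)
    (h0 : ∀ t ∈ Icc (-1 : ℝ) 1, |F 0 t| ≤ c) (htop : ∀ t ∈ Icc (-1 : ℝ) 1, |F n t| ≤ σ) :
    IsSobolevTower n σ fun i t => c⁻¹ * F i t where
  isDerivTower := hF.const_mul c⁻¹
  abs_zero_le_one t ht := by
    rw [abs_mul, abs_of_nonneg (by positivity), inv_mul_le_one₀ (by positivity)]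
    exact h0 t ht
  abs_top_le t ht := by
    rw [abs_mul, abs_of_nonneg (by positivity)]
    exact (mul_le_of_le_one_left (abs_nonneg _) (inv_le_one_of_one_le₀ hc)).trans (htop t ht)

/-- The top derivative of the continuation grows linearly from `0` at `x` to `σ` at `1`. -/
lemma exists_right_continuation (hF : IsSobolevTower (N + 1) σ F) (hx : x ∈ Ioo (-1) 1)
    (hFx : F (N + 1) x = 0) :
    ∃ P : ℕ → ℝ → ℝ, IsDerivTower (Icc x 1) (N + 1) P ∧ (∀ i ≤ N + 1, P i x = F i x) ∧
      (∀ t ∈ Icc x 1, |P 0 t| ≤ 1 + integralBound σ (1 - x) (N + 1) (1 - x)) ∧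
      (∀ t ∈ Icc x 1, |P (N + 1) t| ≤ σ) ∧ F N x + σ * (1 - x) / 2 ≤ P N 1 := by
  have hd : 0 < 1 - x := sub_pos.2 hx.2
  have hsub : Icc x 1 ⊆ Icc (-1) 1 := Icc_subset_Icc_left hx.1.le
  have hσ : 0 ≤ σ := (abs_nonneg _).trans (hF.abs_top_le x (Ioo_subset_Icc_self hx))
  obtain ⟨P, hP, hPx, htop, hP1⟩ := exists_isDerivTower_top_linear σ hx.2 (a := (F · x)) hFx
  have hratio (t : ℝ) (ht : t ∈ Icc x 1) : 0 ≤ (t - x) / (1 - x) ∧ (t - x) / (1 - x) ≤ 1 :=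
    ⟨div_nonneg (sub_nonneg.2 ht.1) hd.le, (div_le_one hd).2 (by linarith [ht.2])⟩
  have habs (t : ℝ) (ht : t ∈ Icc x 1) : |P (N + 1) t| = σ * ((t - x) / (1 - x)) := by
    rw [htop, abs_of_nonneg (mul_nonneg hσ (hratio t ht).1)]
  have hdiff : IsDerivTower (Icc x 1) (N + 1) fun i t => F i t - P i t :=
    IsDerivTower.sub (fun i hi t ht => (hF.isDerivTower i hi t (hsub ht)).mono hsub) hP
  refine ⟨P, hP, hPx, fun t ht => ?_, fun t ht => ?_, hP1⟩
  · have hmono :=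
      integralBound_mono hσ hd.le (sub_nonneg.2 ht.1) (sub_le_sub_right ht.2 x) (N + 1)
    have hbound := hdiff.abs_le_integralBound (σ := σ) hd.ne'
      (fun i hi => sub_eq_zero.2 (hPx i hi.le).symm) (fun u hu => ?_) ht
    · linarith [abs_sub_abs_le_abs_sub (P 0 t) (F 0 t), abs_sub_comm (P 0 t) (F 0 t),
        hF.abs_zero_le_one t (hsub ht)]
    · refine (abs_sub _ _).trans ?_
      rw [habs u hu]
      refine (add_le_add_left (hF.abs_top_le u (hsub hu)) _).trans_eq ?_
      simp [integralBound, mul_add]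
  · rw [habs t ht]
    exact mul_le_of_le_one_right hσ (hratio t ht).2

/-- Glue the continuation to `F` and rescale. -/
lemma exists_le_apply_one (hF : IsSobolevTower (N + 1) σ F) (hx : x ∈ Ioo (-1) 1)
    (hFx : F (N + 1) x = 0) :
    ∃ G, IsSobolevTower (N + 1) σ G ∧
      (F N x + σ * (1 - x) / 2) / (1 + σ * (1 - x) ^ (N + 1) * (N + 3) / (N + 2).factorial) ≤
        G N 1 := by
  obtain ⟨P, hP, hPx, hP0, hPtop, hP1⟩ := hF.exists_right_continuation hx hFx
  have hd : 0 < 1 - x := sub_pos.2 hx.2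
  have hσ : 0 ≤ σ := (abs_nonneg _).trans (hF.abs_top_le x (Ioo_subset_Icc_self hx))
  have hbound : integralBound σ (1 - x) (N + 1) (1 - x) =
      σ * (1 - x) ^ (N + 1) * (N + 3) / (N + 2).factorial := by
    rw [integralBound_self σ hd.ne']
    push_cast
    ring
  have hpos : 0 ≤ σ * (1 - x) ^ (N + 1) * (N + 3) / (N + 2).factorial := by positivity
  rw [hbound] at hP0
  have htower : IsDerivTower (Icc (-1) 1) (N + 1) fun i t => if t ≤ x then F i t else P i t :=
    fun i hi t ht => hasDerivWithinAt_ite_le (Ioo_subset_Icc_self hx)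
      (fun u hu => (hF.isDerivTower i hi u ⟨hu.1, hu.2.trans hx.2.le⟩).mono
        (Icc_subset_Icc_right hx.2.le))
      (hP i hi) (hPx i hi.le).symm (hPx (i + 1) hi).symm ht
  refine ⟨_, of_abs_zero_le htower (le_add_of_nonneg_right hpos) (fun t ht => ?_)
    fun t ht => ?_, ?_⟩
  · split_ifs with htx
    · exact (hF.abs_zero_le_one t ht).trans (le_add_of_nonneg_right hpos)
    · exact hP0 t ⟨(not_le.1 htx).le, ht.2⟩
  · split_ifs with htx
    · exact hF.abs_top_le t ht
    · exact hPtop t ⟨(not_le.1 htx).le, ht.2⟩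
  · rw [if_neg hx.2.not_ge, div_eq_inv_mul]
    gcongr

end IsSobolevTower

/-! ### Maxima of the derivative of order `n - 1` -/

lemma chebDeriv_pred_pred_self (N : ℕ) (t : ℝ) :
    chebDeriv (N + 2 : ℕ) N t = sigmaN (N + 2) * (t ^ 2 / 2 - 1 / (4 * (N + 1))) := by
  have hode := chebDeriv_ode (N + 2) N t
  rw [chebDeriv_pred_self (N + 1), chebDeriv_self] at hode
  push_cast [add_assoc, one_add_one_eq_two] at hode ⊢
  field_simp
  linear_combination 2 * hode

lemma omegaDeriv_self {N : ℕ} (hN : N ≠ 0) (t : ℝ) : omegaDeriv N N t = t * sigmaN (N + 1) := by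
  have hcast : (N - 1 : ℤ) = (N - 1 : ℕ) := by omega
  rw [omegaDeriv, chebDeriv_pred_self, hcast, chebDeriv_eq_zero (by omega), sub_zero]

lemma omegaDeriv_pred_self {N : ℕ} (hN : N ≠ 0) (t : ℝ) : omegaDeriv (N + 1) N t =
    sigmaN (N + 2) * (t ^ 2 / 2 - (N + 3) / (4 * (N + 1) * (N + 2))) := by
  have hcast : ((N + 1 : ℕ) - 1 : ℤ) = N := by omega
  rw [omegaDeriv, chebDeriv_pred_pred_self, hcast, chebDeriv_self, sigmaN_succ N.succ_ne_zero,
    sigmaN_succ hN]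
  push_cast
  field_simp
  ring

/-- The `i`-th derivative of `(α X + β) ω`. -/
noncomputable def affineMulOmegaDeriv (N : ℕ) (α β : ℝ) (i : ℕ) (t : ℝ) : ℝ :=
  omegaDeriv N i t * (α * t + β) + i * α * omegaDeriv N (i - 1) t

lemma isDerivTower_affineMulOmegaDeriv (s : Set ℝ) (n N : ℕ) (α β : ℝ) :
    IsDerivTower s n (affineMulOmegaDeriv N α β) := by
  intro i _ t _
  have homega (j : ℕ) := isDerivTower_omegaDeriv (N := N) s (j + 1) j j.lt_succ_self t ‹t ∈ s›
  have hlin : HasDerivWithinAt (fun t : ℝ => α * t + β) α s t := by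
    simpa using ((hasDerivWithinAt_id t s).const_mul α).add_const β
  have hlower : HasDerivWithinAt (fun t => i * α * omegaDeriv N (i - 1) t)
      (i * α * omegaDeriv N i t) s t := by
    rcases i with _ | i
    · simpa using hasDerivWithinAt_const t s (0 : ℝ)
    · exact (homega i).const_mul _
  refine (((homega i).mul hlin).add hlower).congr_deriv ?_
  simp only [affineMulOmegaDeriv, Nat.add_sub_cancel]
  push_cast
  ring

/-- A polynomial interpolating `T_N` at its extremal nodes, whose derivative of order `N` is a
parabola with vertex at `x`. -/
lemma exists_isDerivTower_node_parabola {N : ℕ} (hN : 2 ≤ N) (s : Set ℝ) (a x : ℝ) :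
    ∃ Q : ℕ → ℝ → ℝ, IsDerivTower s N Q ∧
      (∀ i ≤ N, Q 0 (Chebyshev.node N i) = (-1) ^ i) ∧
      ∀ t, Q N t = sigmaN N + a * (x ^ 2 + 1 / (2 * (N + 1)) - (t - x) ^ 2) := by
  have hσ := (sigmaN_pos (N + 1)).ne'
  refine ⟨fun i t => chebDeriv N i t + affineMulOmegaDeriv N (-2 * a / (sigmaN (N + 1) * (N + 2)))
    (2 * a * x / sigmaN (N + 1)) i t, (isDerivTower_chebDeriv s N N).add
      (isDerivTower_affineMulOmegaDeriv s N N _ _), fun i hi => ?_, fun t => ?_⟩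
  · simp [affineMulOmegaDeriv, chebDeriv_zero_node hi, omegaDeriv_zero_node (by omega) hi]
  · obtain ⟨M, rfl⟩ := Nat.exists_eq_add_of_le' hN
    simp only [affineMulOmegaDeriv, chebDeriv_self]
    rw [omegaDeriv_self (by omega), Nat.add_sub_cancel_right (M + 1) 1,
      omegaDeriv_pred_self (by omega)]
    push_cast
    field_simp
    ring

lemma sigmaN_mul_remainder_le {N : ℕ} (hN : 2 ≤ N) {x : ℝ} (hx : 0.725 < x) (hx1 : x ≤ 1) :
    sigmaN N * (2 * N + 7 / 2) * ((1 - x) ^ N * (N + 3) / (N + 2).factorial) ≤ 1 / 2 := by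
  have hpow : (2 * (1 - x)) ^ N ≤ 0.31 :=
    calc (2 * (1 - x)) ^ N ≤ (2 * (1 - x)) ^ 2 :=
          pow_le_pow_of_le_one (by linarith) (by linarith) hN
      _ ≤ 0.31 := by nlinarith
  obtain ⟨M, rfl⟩ := Nat.exists_eq_add_of_le' hN
  calc _ = (2 * (1 - x)) ^ (M + 2) *
        ((2 * M + 15 / 2) * (M + 5) / (2 * ((M + 3) * (M + 4)))) := by
        rw [sigmaN, Nat.factorial_succ (M + 3), Nat.factorial_succ (M + 2), mul_pow,
          Nat.add_sub_cancel_right (M + 1) 1]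
        push_cast
        field_simp
        ring
    _ ≤ 0.31 * ((2 * M + 15 / 2) * (M + 5) / (2 * ((M + 3) * (M + 4)))) := by gcongr
    _ ≤ 1 / 2 := by
        rw [mul_div_assoc', div_le_iff₀ (by positivity)]
        nlinarith

namespace IsSobolevTower

variable {N : ℕ} {s σ x t : ℝ} {F : ℕ → ℝ → ℝ}

lemma abs_sub_le (hF : IsSobolevTower (N + 1) σ F) (hx : x ∈ Icc (-1) 1) (ht : t ∈ Icc (-1) 1) :
    |F N t - F N x| ≤ σ * |t - x| :=
  (convex_Icc (-1) 1).norm_image_sub_le_of_norm_hasDerivWithin_le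
    (hF.isDerivTower N N.lt_succ_self) hF.abs_top_le hx ht

lemma exists_lt_add_of_node (hF : IsSobolevTower N σ F) {Q : ℕ → ℝ → ℝ}
    (hQ : IsDerivTower (Icc (-1) 1) N Q) (hQ0 : ∀ i ≤ N, Q 0 (Chebyshev.node N i) = (-1) ^ i)
    {e : ℝ} (he : 0 < e) : ∃ ξ ∈ Icc (-1 : ℝ) 1, F N ξ < Q N ξ + e := by
  have hσ : 0 ≤ σ := (abs_nonneg _).trans (hF.abs_top_le 0 (by simp))
  set l := σ / (σ + e) with hl
  have hl0 : 0 ≤ l := by positivity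
  have hl1 : l < 1 := (div_lt_one (by positivity)).2 (by linarith)
  have halt := ((hF.isDerivTower.const_mul l).sub hQ).alternates (m := 1)
    (alternates_mul_sub_of_node (by omega) hF.abs_zero_le_one (fun i hi => hQ0 i (by omega))
      (abs_lt.2 ⟨by linarith, hl1⟩))
  obtain ⟨ξ, hξ, hlt⟩ := halt.exists_pos
  have hgap : (1 - l) * F N ξ ≤ e := by
    have hle : (1 - l) * σ = l * e := by rw [hl]; field_simp; ring
    calc (1 - l) * F N ξ ≤ (1 - l) * σ :=
          mul_le_mul_of_nonneg_left (abs_le.1 (hF.abs_top_le ξ hξ)).2 (by linarith)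
      _ = l * e := hle
      _ ≤ e := mul_le_of_le_one_left he.le hl1.le
  exact ⟨ξ, hξ, by linarith⟩

lemma apply_le_of_isMax (hF : IsSobolevTower (N + 1) σ F) (hN : 2 ≤ N) (hx : x ∈ Icc (-1) 1)
    (hmax : ∀ t ∈ Icc (-1 : ℝ) 1, |F N t| ≤ F N x) {δ : ℝ} (hδ : 0 < δ) :
    F N x ≤ sigmaN N + σ * ((x ^ 2 + 1 / (2 * (N + 1))) / (2 * δ) + δ / 2) := by
  have hσ : 0 ≤ σ := (abs_nonneg _).trans (hF.abs_top_le x hx)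
  have hF' : IsSobolevTower N (F N x) F :=
    ⟨hF.isDerivTower.of_le N.le_succ, hF.abs_zero_le_one, hmax⟩
  obtain ⟨Q, hQ, hQ0, hQN⟩ := exists_isDerivTower_node_parabola hN (Icc (-1) 1) (σ / (2 * δ)) x
  refine le_of_forall_pos_le_add fun e he => ?_
  obtain ⟨ξ, hξ, hlt⟩ := hF'.exists_lt_add_of_node hQ hQ0 he
  have hamgm : |ξ - x| ≤ (ξ - x) ^ 2 / (2 * δ) + δ / 2 := by
    have hsq : 0 ≤ (|ξ - x| - δ) ^ 2 / (2 * δ) := by positivity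
    rw [sub_sq, sq_abs] at hsq
    refine sub_nonneg.1 (hsq.trans_eq ?_)
    field_simp
    ring
  have hlip := (abs_le.1 (hF.abs_sub_le hx hξ)).1
  rw [hQN] at hlt
  calc F N x ≤ F N ξ + σ * |ξ - x| := by linarith
    _ ≤ sigmaN N + σ / (2 * δ) * (x ^ 2 + 1 / (2 * (N + 1)) - (ξ - x) ^ 2) + e +
        σ * ((ξ - x) ^ 2 / (2 * δ) + δ / 2) :=
      add_le_add hlt.le (mul_le_mul_of_nonneg_left hamgm hσ)
    _ = _ := by ring

lemma apply_le_of_isMax_of_sq_le (hF : IsSobolevTower (N + 1) (s * sigmaN (N + 1)) F) (hN : 2 ≤ N)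
    (hs : 0 ≤ s) (hx : x ∈ Icc (-1) 1) (hmax : ∀ t ∈ Icc (-1 : ℝ) 1, |F N t| ≤ F N x)
    (hxN : x ^ 2 + 1 / (2 * (N + 1)) ≤ (1 - 1 / (2 * (N + 1) : ℝ)) ^ 2) :
    F N x ≤ (1 - s) * chebDeriv N N 1 + s * chebDeriv (N + 1 : ℕ) N 1 := by
  set q : ℝ := 1 / (2 * (N + 1)) with hq
  have hq1 : 0 < 1 - q := by
    rw [hq, sub_pos, div_lt_one (by positivity)]
    linarith [N.cast_nonneg (α := ℝ)]
  have hratio : (x ^ 2 + q) / (2 * (1 - q)) ≤ (1 - q) / 2 := by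
    rw [div_le_iff₀ (by positivity)]
    linarith
  have hσ : 0 ≤ s * sigmaN (N + 1) := mul_nonneg hs (sigmaN_pos _).le
  have hqσ : q * sigmaN (N + 1) = sigmaN N := by
    rw [hq, sigmaN_succ (by omega)]
    field_simp
  rw [chebDeriv_self, chebDeriv_pred_self]
  calc F N x ≤ sigmaN N + s * sigmaN (N + 1) * ((x ^ 2 + q) / (2 * (1 - q)) + (1 - q) / 2) :=
        hF.apply_le_of_isMax hN hx hmax hq1
    _ ≤ sigmaN N + s * sigmaN (N + 1) * ((1 - q) / 2 + (1 - q) / 2) := by gcongr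
    _ = _ := by linear_combination -s * hqσ

lemma apply_le_sigmaN_mul_of_isMax (hF : IsSobolevTower (N + 1) (s * sigmaN (N + 1)) F)
    (hN : 2 ≤ N) (hs : s ∈ Icc 0 1) (hx : x ∈ Icc (-1) 1)
    (hmax : ∀ t ∈ Icc (-1 : ℝ) 1, |F N t| ≤ F N x) : F N x ≤ sigmaN N * (2 * N + 7 / 2) := by
  have hx2 : x ^ 2 ≤ 1 := (sq_le_one_iff_abs_le_one x).2 (abs_le.2 hx)
  have hσ := sigmaN_pos (N + 1)
  calc F N x ≤ sigmaN N + s * sigmaN (N + 1) * ((x ^ 2 + 1 / (2 * (N + 1))) / (2 * 1) + 1 / 2) :=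
        hF.apply_le_of_isMax hN hx hmax one_pos
    _ ≤ sigmaN N + 1 * sigmaN (N + 1) * ((1 + 1 / (2 * (N + 1))) / (2 * 1) + 1 / 2) := by
        gcongr
        exact hs.2
    _ = _ := by
        rw [sigmaN_succ (by omega)]
        field_simp
        ring

lemma exists_ge_of_isMax_of_lt (hF : IsSobolevTower (N + 1) (s * sigmaN (N + 1)) F) (hN : 2 ≤ N)
    (hs : s ∈ Icc 0 1) (hx : 0.725 < x) (hx1 : x < 1) (hFx : F (N + 1) x = 0)
    (hmax : ∀ t ∈ Icc (-1 : ℝ) 1, |F N t| ≤ F N x) :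
    ∃ G, IsSobolevTower (N + 1) (s * sigmaN (N + 1)) G ∧ F N x ≤ G N 1 := by
  have := sub_pos.2 hx1
  have hσ : 0 ≤ s * sigmaN (N + 1) := mul_nonneg hs.1 (sigmaN_pos _).le
  obtain ⟨G, hG, hle⟩ := hF.exists_le_apply_one ⟨by linarith, hx1⟩ hFx
  refine ⟨G, hG, le_trans ?_ hle⟩
  set c := (1 - x) ^ N * (N + 3) / (N + 2).factorial with hc
  have hFc : F N x * c ≤ 1 / 2 :=
    (mul_le_mul_of_nonneg_right
      (hF.apply_le_sigmaN_mul_of_isMax hN hs ⟨by linarith, hx1.le⟩ hmax) (by positivity)).trans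
      (sigmaN_mul_remainder_le hN hx hx1.le)
  rw [le_div_iff₀ (by positivity)]
  calc F N x * (1 + s * sigmaN (N + 1) * (1 - x) ^ (N + 1) * (N + 3) / (N + 2).factorial)
      = F N x + s * sigmaN (N + 1) * (1 - x) * (F N x * c) := by rw [hc]; ring
    _ ≤ F N x + s * sigmaN (N + 1) * (1 - x) * (1 / 2) := by gcongr
    _ = _ := by ring

lemma exists_ge_of_isMax (hF : IsSobolevTower (N + 1) (s * sigmaN (N + 1)) F) (hN : 2 ≤ N)
    (hs : s ∈ Icc 0 1) (hx : x ∈ Ico 0 1) (hFx : F (N + 1) x = 0)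
    (hmax : ∀ t ∈ Icc (-1 : ℝ) 1, |F N t| ≤ F N x) :
    ∃ G, IsSobolevTower (N + 1) (s * sigmaN (N + 1)) G ∧ F N x ≤ G N 1 := by
  rcases le_or_gt (x ^ 2 + 1 / (2 * (N + 1))) ((1 - 1 / (2 * (N + 1) : ℝ)) ^ 2) with h | h
  · exact ⟨_, isSobolevTower_convex_comb_chebDeriv hs,
      hF.apply_le_of_isMax_of_sq_le hN hs.1 ⟨by linarith [hx.1], hx.2.le⟩ hmax h⟩
  · refine hF.exists_ge_of_isMax_of_lt hN hs ?_ hx.2 hFx hmax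
    have hN' : (2 : ℝ) ≤ N := by exact_mod_cast hN
    have hq : 1 / (2 * (N + 1) : ℝ) ≤ 1 / 6 := by gcongr; linarith
    have hq0 : 0 ≤ 1 / (2 * (N + 1) : ℝ) := by positivity
    exact lt_of_pow_lt_pow_left₀ 2 hx.1 (by nlinarith)

lemma add_sub_le_apply (hF : IsSobolevTower 2 σ F) (hx : -1 ≤ x) (hxt : x ≤ t) (ht : t ≤ 1) :
    F 0 x + F 1 x * (t - x) - σ / 2 * (t - x) ^ 2 ≤ F 0 t := by
  have hsub : Icc x t ⊆ Icc (-1) 1 := Icc_subset_Icc hx ht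
  have htower : IsDerivTower (Icc x t) 2 F := fun i hi u hu =>
    (hF.isDerivTower i hi u (hsub hu)).mono hsub
  have := htower.taylor_two_le hxt fun u hu => (abs_le.1 (hF.abs_top_le u (hsub hu))).1
  linarith

lemma apply_le_sub_add (hF : IsSobolevTower 2 σ F) (ht : -1 ≤ t) (htx : t ≤ x) (hx : x ≤ 1) :
    F 0 t ≤ F 0 x - F 1 x * (x - t) + σ / 2 * (x - t) ^ 2 := by
  have := hF.reflectTower.neg.add_sub_le_apply (neg_le_neg hx) (neg_le_neg htx) (neg_le.1 ht)
  simp only [_root_.reflectTower, neg_neg, pow_zero, pow_one, one_mul, neg_mul] at this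
  linarith

lemma apply_one_le_add (hF : IsSobolevTower 2 σ F) (hx : x ∈ Icc (-1) 1) :
    F 1 x ≤ 1 + σ * (1 + x ^ 2) / 2 := by
  have hr := hF.add_sub_le_apply hx.1 hx.2 le_rfl
  have hl := hF.apply_le_sub_add le_rfl hx.1 hx.2
  have hr1 := (abs_le.1 (hF.abs_zero_le_one 1 (by simp))).2
  have hl1 := (abs_le.1 (hF.abs_zero_le_one (-1) (by simp))).1
  linarith

lemma apply_one_sq_le (hF : IsSobolevTower 2 σ F) (hσ : 0 < σ) (hx : x ∈ Icc (-1) 1)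
    (h0 : 0 ≤ F 1 x) (hle : F 1 x ≤ σ * (1 + x)) : F 1 x ^ 2 ≤ 4 * σ := by
  have hdiv : F 1 x / σ ≤ 1 + x := (div_le_iff₀' hσ).2 hle
  have hdiv0 : 0 ≤ F 1 x / σ := by positivity
  have hl := hF.apply_le_sub_add (t := x - F 1 x / σ) (by linarith) (by linarith) hx.2
  have h1 := (abs_le.1 (hF.abs_zero_le_one _ ⟨by linarith, by linarith [hx.2]⟩)).1.trans hl
  have h2 := (abs_le.1 (hF.abs_zero_le_one x hx)).2
  have hsq : F 1 x * (F 1 x / σ) = 2 * (σ / 2 * (F 1 x / σ) ^ 2) := by field_simp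
  rw [sub_sub_cancel] at h1
  rw [← div_le_iff₀ hσ, sq, mul_div_assoc]
  linarith

lemma apply_one_le_two_mul_sqrt (hF : IsSobolevTower 2 σ F) (hσ : 1 ≤ σ) (hx : x ∈ Icc 0 1) :
    F 1 x ≤ 2 * √σ := by
  have hxI : x ∈ Icc (-1) 1 := ⟨by linarith [hx.1], hx.2⟩
  have hr1 : 1 ≤ √σ := Real.one_le_sqrt.2 hσ
  have hrσ : √σ ^ 2 = σ := Real.sq_sqrt (by positivity)
  rcases le_total (F 1 x) 0 with h0 | h0
  · linarith
  rcases le_or_gt (F 1 x) (σ * (1 + x)) with hle | hlt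
  · refine le_of_sq_le_sq ?_ (by positivity)
    rw [mul_pow, hrσ]
    linarith [hF.apply_one_sq_le (by positivity) hxI h0 hle]
  · have hb := hF.apply_one_le_add hxI
    have h1x : 0 ≤ 1 - x := sub_nonneg.2 hx.2
    have hsum : √σ * (1 + x) ≤ 2 := by
      refine le_of_sq_le_sq ?_ zero_le_two
      have : 0 ≤ σ * ((3 * x + 1) * (1 - x)) := by have := hx.1; positivity
      rw [mul_pow, hrσ]
      linarith
    have hsq : √σ * (1 + x ^ 2) ≤ 2 :=
      (mul_le_mul_of_nonneg_left (by nlinarith [hx.1]) (by positivity)).trans hsum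
    have hfactor : 0 ≤ (√σ - 1) * (2 - (√σ + 1) * (1 + x ^ 2) / 2) :=
      mul_nonneg (by linarith) (by nlinarith [hx.1])
    nlinarith [hx.1]

end IsSobolevTower

lemma isSobolevTower_parabola {a b c : ℝ} (ha : 0 ≤ a)
    (h : ∀ t ∈ Icc (-1 : ℝ) 1, |a / 2 * t ^ 2 + b * t + c| ≤ 1) :
    IsSobolevTower 2 a fun i t => match i with
      | 0 => a / 2 * t ^ 2 + b * t + c
      | 1 => a * t + b
      | _ => a where
  isDerivTower := by
    rintro (_ | _ | i) hi t -
    · exact ((((hasDerivAt_pow 2 t).const_mul (a / 2)).add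
        ((hasDerivAt_id t).const_mul b)).add_const c).hasDerivWithinAt.congr_deriv (by simp; ring)
    · exact (((hasDerivAt_id t).const_mul a).add_const b).hasDerivWithinAt.congr_deriv (by simp)
    · omega
  abs_zero_le_one := h
  abs_top_le _ _ := (abs_of_nonneg ha).le

namespace IsSobolevTower

lemma exists_ge_of_two {σ x : ℝ} {F : ℕ → ℝ → ℝ} (hF : IsSobolevTower 2 σ F) (hσ : σ ≤ 4)
    (hx : x ∈ Icc 0 1) : ∃ G, IsSobolevTower 2 σ G ∧ F 1 x ≤ G 1 1 := by
  have hσ0 : 0 ≤ σ := (abs_nonneg _).trans (hF.abs_top_le 0 (by simp))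
  rcases le_total σ 1 with hσ1 | hσ1
  · refine ⟨_, isSobolevTower_parabola (b := 1) (c := -σ / 2) hσ0 fun t ht => ?_, ?_⟩
    · have h1 : 0 ≤ 1 + t := by linarith [ht.1]
      have h2 : 0 ≤ 1 - t := by linarith [ht.2]
      exact abs_le.2 ⟨by nlinarith [mul_nonneg h1 h2], by nlinarith [mul_nonneg h1 h2]⟩
    · have hx2 : x ^ 2 ≤ 1 := pow_le_one₀ hx.1 hx.2
      have := hF.apply_one_le_add ⟨by linarith [hx.1], hx.2⟩
      change F 1 x ≤ σ * 1 + 1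
      nlinarith
  · have hr2 : √σ ≤ 2 := Real.sqrt_le_iff.2 ⟨zero_le_two, by linarith⟩
    have hrσ : √σ ^ 2 = σ := Real.sq_sqrt hσ0
    refine ⟨_, isSobolevTower_parabola (b := √σ * (2 - √σ)) (c := (2 - √σ) ^ 2 / 2 - 1) hσ0
      fun t ht => ?_, ?_⟩
    · have hsq : (√σ * (t - 1) + 2) ^ 2 ≤ 2 ^ 2 :=
        sq_le_sq' (by nlinarith [ht.1, ht.2]) (by nlinarith [ht.2, Real.sqrt_nonneg σ])
      have heq : σ / 2 * t ^ 2 + √σ * (2 - √σ) * t + ((2 - √σ) ^ 2 / 2 - 1) =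
          (√σ * (t - 1) + 2) ^ 2 / 2 - 1 := by linear_combination -(t ^ 2 / 2) * hrσ
      rw [heq]
      exact abs_le.2 ⟨by nlinarith [sq_nonneg (√σ * (t - 1) + 2)], by linarith⟩
    · have := hF.apply_one_le_two_mul_sqrt hσ1 hx
      change F 1 x ≤ σ * 1 + √σ * (2 - √σ)
      linarith

end IsSobolevTower

/-! ### The classes `W^n_∞(σ)` -/

lemma IsDerivTower.iteratedDerivWithin_eq {n : ℕ} {F : ℕ → ℝ → ℝ} {s : Set ℝ}
    (hF : IsDerivTower s n F) (hs : UniqueDiffOn ℝ s) {i : ℕ} (hi : i ≤ n) :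
    EqOn (iteratedDerivWithin i (F 0) s) (F i) s := by
  induction i with
  | zero => intro x _; rw [iteratedDerivWithin_zero]
  | succ i ih =>
    intro x hx
    have ih := ih (i.le_succ.trans hi)
    rw [iteratedDerivWithin_succ, derivWithin_congr ih (ih hx)]
    exact (hF i hi x hx).derivWithin (hs x hx)

lemma memW.isSobolevTower {n : ℕ} {σ : ℝ} {f : ℝ → ℝ} (hf : memW n σ f) :
    IsSobolevTower n σ fun i => iteratedDerivWithin i f (Icc (-1) 1) where
  isDerivTower i hi x hx := by
    simp only [iteratedDerivWithin_succ]
    exact (hf.1 i hi x hx).hasDerivWithinAt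
  abs_zero_le_one x hx := by simpa only [iteratedDerivWithin_zero] using hf.2.1 x hx
  abs_top_le := hf.2.2

namespace IsSobolevTower

variable {n k N : ℕ} {σ s x : ℝ} {F : ℕ → ℝ → ℝ}

lemma iteratedDerivWithin_eq (hF : IsSobolevTower n σ F) (hk : k ≤ n) :
    EqOn (iteratedDerivWithin k (F 0) (Icc (-1) 1)) (F k) (Icc (-1) 1) :=
  hF.isDerivTower.iteratedDerivWithin_eq (uniqueDiffOn_Icc (by norm_num)) hk

lemma memW (hF : IsSobolevTower n σ F) : memW n σ (F 0) := by
  refine ⟨fun i hi => ?_, hF.abs_zero_le_one, fun x hx => ?_⟩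
  · have hFi : DifferentiableOn ℝ (F i) (Icc (-1) 1) :=
      fun x hx => (hF.isDerivTower i hi x hx).differentiableWithinAt
    exact hFi.congr (hF.iteratedDerivWithin_eq hi.le)
  · rw [hF.iteratedDerivWithin_eq le_rfl hx]
    exact hF.abs_top_le x hx

lemma apply_succ_eq_zero_of_isMax (hF : IsSobolevTower n σ F) (hk : k < n)
    (hx : x ∈ Ioo (-1) 1) (hmax : ∀ t ∈ Icc (-1 : ℝ) 1, |F k t| ≤ F k x) : F (k + 1) x = 0 := by
  have hnhds : Icc (-1 : ℝ) 1 ∈ nhds x := Icc_mem_nhds hx.1 hx.2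
  have hlocal : IsLocalMax (F k) x :=
    Filter.mem_of_superset hnhds fun t ht => (le_abs_self _).trans (hmax t ht)
  exact hlocal.hasDerivAt_eq_zero
    ((hF.isDerivTower k hk x (Ioo_subset_Icc_self hx)).hasDerivAt hnhds)

lemma exists_abs_le_abs_one (hF : IsSobolevTower (N + 1) (s * sigmaN (N + 1)) F)
    (hs : s ∈ Icc 0 1) (hk : k ≠ 0) (hkN : k ≤ N) (hx : x ∈ Icc (-1) 1) :
    ∃ G, IsSobolevTower (N + 1) (s * sigmaN (N + 1)) G ∧ |F k x| ≤ |G k 1| := by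
  obtain ⟨G, hG, y, ⟨hy0, hy1⟩, hmax, hFG⟩ := hF.exists_isMaxOn_nonneg (Nat.lt_succ_of_le hkN)
  suffices ∃ H, IsSobolevTower (N + 1) (s * sigmaN (N + 1)) H ∧ G k y ≤ H k 1 by
    obtain ⟨H, hH, hGH⟩ := this
    exact ⟨H, hH, (hFG x hx).trans (hGH.trans (le_abs_self _))⟩
  rcases hy1.eq_or_lt with rfl | hy1
  · exact ⟨G, hG, le_rfl⟩
  have hy : y ∈ Ioo (-1) 1 := ⟨by linarith, hy1⟩
  have hcrit := hG.apply_succ_eq_zero_of_isMax (Nat.lt_succ_of_le hkN) hy hmax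
  obtain ⟨j, rfl⟩ := Nat.exists_eq_succ_of_ne_zero hk
  rcases hkN.lt_or_eq with hlt | rfl
  · exact ⟨_, isSobolevTower_convex_comb_chebDeriv hs,
      (le_abs_self _).trans (hG.abs_le_of_deriv_eq_zero hlt hs hy hcrit)⟩
  rcases j.eq_zero_or_pos with rfl | hj
  · refine hG.exists_ge_of_two ?_ ⟨hy0, hy1.le⟩
    have hsigma : sigmaN 2 = 4 := by norm_num [sigmaN]
    exact (mul_le_of_le_one_left (sigmaN_pos 2).le hs.2).trans_eq hsigma
  · exact hG.exists_ge_of_isMax (Nat.succ_le_succ hj) hs ⟨hy0, hy1⟩ hcrit hmax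

end IsSobolevTower

section mval

variable {N k : ℕ} {s x : ℝ}

lemma bddAbove_abs_iteratedDerivWithin_one (hN : N ≠ 0) (hk : k ≤ N) :
    BddAbove {y | ∃ f : ℝ → ℝ, memW (N + 1) (s * sigmaN (N + 1)) f ∧
      y = |iteratedDerivWithin k f (Icc (-1 : ℝ) 1) 1|} := by
  refine ⟨|chebDeriv N k 1 + s * omegaDeriv N k 1|, ?_⟩
  rintro _ ⟨f, hf, rfl⟩
  exact hf.isSobolevTower.abs_one_le_chebDeriv_add hN hk

lemma mval_le_mval_one (hs : s ∈ Icc 0 1) (hk : k ≠ 0) (hkN : k ≤ N) (hx : x ∈ Icc (-1) 1) :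
    mval (N + 1) k x (s * sigmaN (N + 1)) ≤ mval (N + 1) k 1 (s * sigmaN (N + 1)) := by
  refine csSup_le ⟨_, _, (isSobolevTower_convex_comb_chebDeriv hs).memW, rfl⟩ ?_
  rintro _ ⟨f, hf, rfl⟩
  obtain ⟨G, hG, hfG⟩ := hf.isSobolevTower.exists_abs_le_abs_one hs hk hkN hx
  refine hfG.trans (le_csSup (bddAbove_abs_iteratedDerivWithin_one (by omega) hkN)
    ⟨G 0, hG.memW, ?_⟩)
  rw [hG.iteratedDerivWithin_eq (by omega) (by simp)]

end mval

/-- Karlin's conjecture in the polynomial range `0 ≤ σ ≤ σ_n`,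
for all `n ≥ 2` and `1 ≤ k ≤ n-1`. -/
theorem karlin_conjecture_polynomial_range (n k : ℕ) (σ : ℝ) (hn : 2 ≤ n)
    (hk1 : 1 ≤ k) (hk2 : k ≤ n - 1) (hσ0 : 0 ≤ σ) (hσn : σ ≤ sigmaN n) :
    (∀ x ∈ Icc (-1:ℝ) 1, mval n k x σ ≤ mval n k 1 σ) ∧
    sSup {y | ∃ x ∈ Icc (-1:ℝ) 1, y = mval n k x σ} = mval n k 1 σ := by
  obtain ⟨N, rfl⟩ : ∃ N, n = N + 1 := ⟨n - 1, by omega⟩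
  have hpos := sigmaN_pos (N + 1)
  obtain ⟨s, hs, rfl⟩ : ∃ s ∈ Icc (0 : ℝ) 1, σ = s * sigmaN (N + 1) :=
    ⟨σ / sigmaN (N + 1), ⟨by positivity, (div_le_one hpos).2 hσn⟩, by field_simp⟩
  have hle : ∀ x ∈ Icc (-1 : ℝ) 1, mval (N + 1) k x (s * sigmaN (N + 1)) ≤
      mval (N + 1) k 1 (s * sigmaN (N + 1)) :=
    fun x hx => mval_le_mval_one hs (by omega) hk2 hx
  refine ⟨hle, IsGreatest.csSup_eq ⟨⟨1, by simp, rfl⟩, ?_⟩⟩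
  rintro _ ⟨x, hx, rfl⟩
  exact hle x hx
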